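/- arXiv:2207.11544 — 2 statements merged into one kernel-verified Lean document; each statement's English description precedes it below -/
import Mathlib

section
/- Let q ∈ ℝ and let M : ℝ² × (0,∞) → ℝ be smooth, parabolically homogeneous of degree q (M(λx, λ²t) = λ^q M(x,t) for all λ > 0), and such that for every multi-index k = (k₁,k₂) and integer s ≥ 0 there are constants C, c > 0 with |∂_{x₁}^{k₁}∂_{x₂}^{k₂}∂_t^s M(x,t)| ≤ C t^{(q−k₁−k₂−2s)/2} e^{−c|x|²/t} for all x ∈ ℝ², t > 0. For i ∈ {1,2}, let ∂_iE(y) = y_i/(2π|y|²) and J_i(x, y₂, t) = ∫_ℝ ∂_iE(y₁, y₂) M(x₁ − y₁, x₂, t) dy₁. Then for every multi-index k = (k₁,k₂) and integers l, s ≥ 0 there exist constants C, c > 0 such that for all x₁ ∈ ℝ, x₂ > 0, y₂ > 0, t > 0: |∂_{x₁}^{k₁}∂_{x₂}^{k₂}∂_{y₂}^{l}∂_t^{s} J_i(x, y₂, t)| ≤ C t^{(q+1−2s−k₂)/2} (x₁² + (x₂+y₂)² + t)^{−(k₁+l+1)/2} e^{−c x₂²/t}. -/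
/-- The `i`-th partial derivative of the fundamental solution `E(y) = (1/2π) log|y|`
of the Laplacian on `ℝ²`: `∂_iE(y) = y_i/(2π|y|²)`. -/
noncomputable def dE (i : Fin 2) (y₁ y₂ : ℝ) : ℝ :=
  (if i = 0 then y₁ else y₂) / (2 * Real.pi * (y₁ ^ 2 + y₂ ^ 2))

/-- The half-space kernel `J_i(x,y₂,t) = ∫_ℝ ∂_iE(y₁,y₂) M(x₁−y₁,x₂,t) dy₁`. -/
noncomputable def Jint (M : ℝ → ℝ → ℝ → ℝ) (i : Fin 2) (x₁ x₂ y₂ t : ℝ) : ℝ :=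
  ∫ y₁ : ℝ, dE i y₁ y₂ * M (x₁ - y₁) x₂ t

/-- Partial derivative operators on functions of three real variables. -/
noncomputable def D1₃ (f : ℝ → ℝ → ℝ → ℝ) : ℝ → ℝ → ℝ → ℝ :=
  fun a b c => deriv (fun s => f s b c) a
noncomputable def D2₃ (f : ℝ → ℝ → ℝ → ℝ) : ℝ → ℝ → ℝ → ℝ :=
  fun a b c => deriv (fun s => f a s c) b
noncomputable def D3₃ (f : ℝ → ℝ → ℝ → ℝ) : ℝ → ℝ → ℝ → ℝ :=
  fun a b c => deriv (fun s => f a b s) c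

/-- Partial derivative operators on functions of four real variables. -/
noncomputable def D1₄ (f : ℝ → ℝ → ℝ → ℝ → ℝ) : ℝ → ℝ → ℝ → ℝ → ℝ :=
  fun a b c d => deriv (fun s => f s b c d) a
noncomputable def D2₄ (f : ℝ → ℝ → ℝ → ℝ → ℝ) : ℝ → ℝ → ℝ → ℝ → ℝ :=
  fun a b c d => deriv (fun s => f a s c d) b
noncomputable def D3₄ (f : ℝ → ℝ → ℝ → ℝ → ℝ) : ℝ → ℝ → ℝ → ℝ → ℝ :=
  fun a b c d => deriv (fun s => f a b s d) c
noncomputable def D4₄ (f : ℝ → ℝ → ℝ → ℝ → ℝ) : ℝ → ℝ → ℝ → ℝ → ℝ :=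
  fun a b c d => deriv (fun s => f a b c s) d

/-! ### Calculus of the operators on three variables -/

def EqT (f g : ℝ → ℝ → ℝ → ℝ) : Prop := ∀ a b c, 0 < c → f a b c = g a b c

def HT : Set (ℝ × ℝ × ℝ) := {p : ℝ × ℝ × ℝ | 0 < p.2.2}

theorem HT_open : IsOpen HT := isOpen_lt continuous_const (by fun_prop)

def unc (f : ℝ → ℝ → ℝ → ℝ) : ℝ × ℝ × ℝ → ℝ := fun p => f p.1 p.2.1 p.2.2

def Sm (f : ℝ → ℝ → ℝ → ℝ) : Prop := ContDiffOn ℝ (⊤ : ℕ∞) (unc f) HT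

theorem EqT.refl (f) : EqT f f := fun _ _ _ _ => rfl
theorem EqT.symm {f g} (h : EqT f g) : EqT g f := fun a b c hc => (h a b c hc).symm
theorem EqT.trans {f g k} (h : EqT f g) (h' : EqT g k) : EqT f k :=
  fun a b c hc => (h a b c hc).trans (h' a b c hc)

theorem EqT.D1 {f g} (h : EqT f g) : EqT (D1₃ f) (D1₃ g) := fun a b c hc => by
  have : (fun s => f s b c) = fun s => g s b c := funext fun s => h s b c hc
  simp only [D1₃, this]
theorem EqT.D2 {f g} (h : EqT f g) : EqT (D2₃ f) (D2₃ g) := fun a b c hc => by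
  have : (fun s => f a s c) = fun s => g a s c := funext fun s => h a s c hc
  simp only [D2₃, this]
theorem EqT.D3 {f g} (h : EqT f g) : EqT (D3₃ f) (D3₃ g) := fun a b c hc => by
  simp only [D3₃]
  apply Filter.EventuallyEq.deriv_eq
  filter_upwards [lt_mem_nhds hc] with s hs using h a b s hs

theorem Sm.diffAt {f} (h : Sm f) {a b c : ℝ} (hc : 0 < c) :
    DifferentiableAt ℝ (unc f) (a, b, c) :=
  (h.contDiffAt (HT_open.mem_nhds hc)).differentiableAt (by simp)

theorem Sm.has1 {f} (h : Sm f) {a b c : ℝ} (hc : 0 < c) :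
    HasDerivAt (fun s => f s b c) (fderiv ℝ (unc f) (a, b, c) (1, 0, 0)) a := by
  have h1 : HasDerivAt (fun s : ℝ => ((s, b, c) : ℝ × ℝ × ℝ)) (1, 0, 0) a :=
    (hasDerivAt_id a).prodMk ((hasDerivAt_const a b).prodMk (hasDerivAt_const a c))
  exact (h.diffAt (a := a) (b := b) hc).hasFDerivAt.comp_hasDerivAt a h1
theorem Sm.has2 {f} (h : Sm f) {a b c : ℝ} (hc : 0 < c) :
    HasDerivAt (fun s => f a s c) (fderiv ℝ (unc f) (a, b, c) (0, 1, 0)) b := by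
  have h1 : HasDerivAt (fun s : ℝ => ((a, s, c) : ℝ × ℝ × ℝ)) (0, 1, 0) b :=
    (hasDerivAt_const b a).prodMk ((hasDerivAt_id b).prodMk (hasDerivAt_const b c))
  exact (h.diffAt (a := a) (b := b) hc).hasFDerivAt.comp_hasDerivAt b h1
theorem Sm.has3 {f} (h : Sm f) {a b c : ℝ} (hc : 0 < c) :
    HasDerivAt (fun s => f a b s) (fderiv ℝ (unc f) (a, b, c) (0, 0, 1)) c := by
  have h1 : HasDerivAt (fun s : ℝ => ((a, b, s) : ℝ × ℝ × ℝ)) (0, 0, 1) c :=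
    (hasDerivAt_const c a).prodMk ((hasDerivAt_const c b).prodMk (hasDerivAt_id c))
  exact (h.diffAt (a := a) (b := b) hc).hasFDerivAt.comp_hasDerivAt c h1

/-- directional derivative -/
noncomputable def DV (v : ℝ × ℝ × ℝ) (f : ℝ → ℝ → ℝ → ℝ) : ℝ → ℝ → ℝ → ℝ :=
  fun a b c => fderiv ℝ (unc f) (a, b, c) v

theorem Sm.D1eq {f} (h : Sm f) : EqT (D1₃ f) (DV (1, 0, 0) f) := fun _ _ _ hc => (h.has1 hc).deriv
theorem Sm.D2eq {f} (h : Sm f) : EqT (D2₃ f) (DV (0, 1, 0) f) := fun _ _ _ hc => (h.has2 hc).deriv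
theorem Sm.D3eq {f} (h : Sm f) : EqT (D3₃ f) (DV (0, 0, 1) f) := fun _ _ _ hc => (h.has3 hc).deriv

theorem Sm.fderiv {f} (h : Sm f) : ContDiffOn ℝ (⊤ : ℕ∞) (fderiv ℝ (unc f)) HT :=
  h.fderiv_of_isOpen HT_open (by simp)

theorem Sm.DV {f} (h : Sm f) (v) : Sm (DV v f) := h.fderiv.clm_apply contDiffOn_const

theorem Sm.congr {f g} (h : Sm f) (e : EqT g f) : Sm g :=
  ContDiffOn.congr h (fun p hp => e p.1 p.2.1 p.2.2 hp)

theorem Sm.D1 {f} (h : Sm f) : Sm (D1₃ f) := (h.DV _).congr h.D1eq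
theorem Sm.D2 {f} (h : Sm f) : Sm (D2₃ f) := (h.DV _).congr h.D2eq
theorem Sm.D3 {f} (h : Sm f) : Sm (D3₃ f) := (h.DV _).congr h.D3eq

theorem Sm.commV {f} (h : Sm f) (v w) : EqT (_root_.DV v (_root_.DV w f)) (_root_.DV w (_root_.DV v f)) := by
  intro a b c hc
  have hd : DifferentiableAt ℝ (_root_.fderiv ℝ (unc f)) (a, b, c) :=
    (h.fderiv.contDiffAt (HT_open.mem_nhds hc)).differentiableAt (by simp)
  have key : ∀ v w, _root_.DV v (_root_.DV w f) a b c
      = _root_.fderiv ℝ (_root_.fderiv ℝ (unc f)) (a, b, c) v w := by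
    intro v w
    have : HasFDerivAt (unc (_root_.DV w f)) _ (a, b, c) :=
      hd.hasFDerivAt.clm_apply (hasFDerivAt_const w (a, b, c))
    simp only [_root_.DV]
    erw [this.fderiv]
    simp
  rw [key, key]
  have hs : IsSymmSndFDerivAt ℝ (unc f) (a, b, c) :=
    (h.contDiffAt (HT_open.mem_nhds hc)).isSymmSndFDerivAt (by simp only [minSmoothness_of_isRCLikeNormedField]; exact WithTop.coe_le_coe.mpr le_top)
  exact hs v w

theorem DV_congr {f g} (h : EqT f g) (v) : EqT (DV v f) (DV v g) := by
  intro a b c hc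
  have : unc f =ᶠ[nhds (a, b, c)] unc g := by
    filter_upwards [HT_open.mem_nhds (show (a, b, c) ∈ HT from hc)] with p hp
      using h _ _ _ hp
  simp only [DV, this.fderiv_eq]

theorem Sm.comm21 {f} (h : Sm f) : EqT (D2₃ (D1₃ f)) (D1₃ (D2₃ f)) :=
  (h.D1.D2eq.trans (DV_congr h.D1eq _)).trans
    ((h.commV _ _).trans (h.D2.D1eq.trans (DV_congr h.D2eq _)).symm)
theorem Sm.comm31 {f} (h : Sm f) : EqT (D3₃ (D1₃ f)) (D1₃ (D3₃ f)) :=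
  (h.D1.D3eq.trans (DV_congr h.D1eq _)).trans
    ((h.commV _ _).trans (h.D3.D1eq.trans (DV_congr h.D3eq _)).symm)
theorem Sm.comm32 {f} (h : Sm f) : EqT (D3₃ (D2₃ f)) (D2₃ (D3₃ f)) :=
  (h.D2.D3eq.trans (DV_congr h.D2eq _)).trans
    ((h.commV _ _).trans (h.D3.D2eq.trans (DV_congr h.D3eq _)).symm)

section
variable {A B : (ℝ → ℝ → ℝ → ℝ) → (ℝ → ℝ → ℝ → ℝ)}

theorem iter_congr (hA : ∀ {f g}, EqT f g → EqT (A f) (A g)) (n : ℕ) {f g} (h : EqT f g) :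
    EqT (A^[n] f) (A^[n] g) := by
  induction n generalizing f g with
  | zero => exact h
  | succ n ih => exact ih (hA h)

theorem iter_Sm (hA : ∀ {f}, Sm f → Sm (A f)) (n : ℕ) {f} (h : Sm f) :
    Sm (A^[n] f) := by
  induction n generalizing f with
  | zero => exact h
  | succ n ih => exact ih (hA h)

theorem iter_comm (hA : ∀ {f g}, EqT f g → EqT (A f) (A g))
    (hS : ∀ {f}, Sm f → Sm (A f))
    (hc : ∀ {f}, Sm f → EqT (A (B f)) (B (A f))) (n : ℕ) {f} (h : Sm f) :
    EqT (A^[n] (B f)) (B (A^[n] f)) := by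
  induction n generalizing f with
  | zero => exact EqT.refl _
  | succ n ih =>
    exact (iter_congr hA n (hc h)).trans (ih (hS h))
end

/-- Smooth with Gaussian bounds of degree `r`. -/
structure Good (r : ℝ) (N : ℝ → ℝ → ℝ → ℝ) : Prop where
  sm : Sm N
  bd : ∀ k₁ k₂ s : ℕ, ∃ C > (0 : ℝ), ∃ c > (0 : ℝ), ∀ (x₁ x₂ : ℝ), ∀ t > (0 : ℝ),
      |(D1₃^[k₁] (D2₃^[k₂] (D3₃^[s] N))) x₁ x₂ t|
        ≤ C * t ^ ((r - (k₁ : ℝ) - (k₂ : ℝ) - 2 * (s : ℝ)) / 2)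
            * Real.exp (-c * (x₁ ^ 2 + x₂ ^ 2) / t)

theorem Good.D3 {r N} (h : Good r N) : Good (r - 2) (D3₃ N) := by
  refine ⟨h.sm.D3, fun a b s => ?_⟩
  obtain ⟨C, hC, c, hc, H⟩ := h.bd a b (s + 1)
  refine ⟨C, hC, c, hc, fun x₁ x₂ t ht => ?_⟩
  have := H x₁ x₂ t ht
  rw [Function.iterate_succ_apply] at this
  convert this using 5
  push_cast; ring

theorem Good.D2 {r N} (h : Good r N) : Good (r - 1) (D2₃ N) := by
  refine ⟨h.sm.D2, fun a b s => ?_⟩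
  obtain ⟨C, hC, c, hc, H⟩ := h.bd a (b + 1) s
  refine ⟨C, hC, c, hc, fun x₁ x₂ t ht => ?_⟩
  have := H x₁ x₂ t ht
  rw [Function.iterate_succ_apply] at this
  have e : EqT (D1₃^[a] (D2₃^[b] (D3₃^[s] (D2₃ N)))) (D1₃^[a] (D2₃^[b] (D2₃ (D3₃^[s] N)))) :=
    iter_congr EqT.D1 a (iter_congr EqT.D2 b (iter_comm EqT.D3 Sm.D3 Sm.comm32 s h.sm))
  rw [e _ _ _ ht]
  convert this using 5
  push_cast; ring

theorem Good.D1 {r N} (h : Good r N) : Good (r - 1) (D1₃ N) := by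
  refine ⟨h.sm.D1, fun a b s => ?_⟩
  obtain ⟨C, hC, c, hc, H⟩ := h.bd (a + 1) b s
  refine ⟨C, hC, c, hc, fun x₁ x₂ t ht => ?_⟩
  have := H x₁ x₂ t ht
  rw [Function.iterate_succ_apply] at this
  have e : EqT (D1₃^[a] (D2₃^[b] (D3₃^[s] (D1₃ N)))) (D1₃^[a] (D1₃ (D2₃^[b] (D3₃^[s] N)))) :=
    iter_congr EqT.D1 a ((iter_congr EqT.D2 b (iter_comm EqT.D3 Sm.D3 Sm.comm31 s h.sm)).trans
      (iter_comm EqT.D2 Sm.D2 Sm.comm21 b (iter_Sm Sm.D3 s h.sm)))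
  rw [e _ _ _ ht]
  convert this using 5
  push_cast; ring

theorem Good.iter2 {r N} (h : Good r N) (n : ℕ) : Good (r - n) (D2₃^[n] N) := by
  induction n generalizing r N with
  | zero => simpa using h
  | succ n ih =>
    have := ih h.D2
    rw [Function.iterate_succ_apply]
    convert this using 1
    push_cast; ring

theorem Good.iter3 {r N} (h : Good r N) (n : ℕ) : Good (r - 2 * n) (D3₃^[n] N) := by
  induction n generalizing r N with
  | zero => simpa using h
  | succ n ih =>
    have := ih h.D3
    rw [Function.iterate_succ_apply]
    convert this using 1
    push_cast; ring

theorem Good.iter1 {r N} (h : Good r N) (n : ℕ) : Good (r - n) (D1₃^[n] N) := by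
  induction n generalizing r N with
  | zero => simpa using h
  | succ n ih =>
    have := ih h.D1
    rw [Function.iterate_succ_apply]
    convert this using 1
    push_cast; ring

/-! ### Differentiation under the integral sign -/

theorem Good.locBd {r N} (h : Good r N) (x₁ : ℝ) {t₀ : ℝ} (ht₀ : 0 < t₀) :
    ∃ K c : ℝ, 0 ≤ K ∧ 0 < c ∧ ∀ s ∈ Metric.ball x₁ 1, ∀ x₂, ∀ t ∈ Metric.ball t₀ (t₀ / 2), ∀ y,
      |N (s - y) x₂ t| ≤ K * Real.exp (-c * (y - x₁) ^ 2) := by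
  obtain ⟨C, hC, c, hc, H⟩ := h.bd 0 0 0
  simp only [Function.iterate_zero, id] at H
  set p := (r - ((0 : ℕ) : ℝ) - ((0 : ℕ) : ℝ) - 2 * ((0 : ℕ) : ℝ)) / 2
  obtain ⟨P, hP⟩ := (isCompact_Icc (a := t₀ / 2) (b := 2 * t₀)).exists_bound_of_continuousOn
    (f := fun t : ℝ => t ^ p) (fun t ht => (Real.continuousAt_rpow_const _ _
      (Or.inl (by have := ht.1; exact (lt_of_lt_of_le (by positivity) this).ne'))).continuousWithinAt)
  have hP0 : 0 ≤ P := (norm_nonneg _).trans (hP t₀ ⟨by linarith, by linarith⟩)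
  refine ⟨C * P * Real.exp (c / (2 * t₀)), c / (4 * t₀), by positivity, by positivity, ?_⟩
  intro s hs x₂ t ht y
  rw [Metric.mem_ball, Real.dist_eq, abs_lt] at hs ht
  have ht0 : 0 < t := by linarith
  refine (H (s - y) x₂ t ht0).trans ?_
  have h1 : t ^ p ≤ P := (le_abs_self _).trans (hP t ⟨by linarith, by linarith⟩)
  have h2 : -c * ((s - y) ^ 2 + x₂ ^ 2) / t ≤ c / (2 * t₀) + -(c / (4 * t₀)) * (y - x₁) ^ 2 := by
    have e1 : -c * ((s - y) ^ 2 + x₂ ^ 2) / t ≤ -c * ((s - y) ^ 2) / (2 * t₀) := by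
      have : c * ((s - y) ^ 2) / (2 * t₀) ≤ c * ((s - y) ^ 2 + x₂ ^ 2) / t := by
        gcongr
        · nlinarith [sq_nonneg x₂]
        · linarith
      simp only [neg_mul, neg_div]
      linarith
    have e2 : -c * ((s - y) ^ 2) / (2 * t₀) ≤ -c * ((y - x₁) ^ 2 / 2 - 1) / (2 * t₀) := by
      have h3 : (s - x₁) ^ 2 ≤ 1 := by nlinarith
      have : (y - x₁) ^ 2 / 2 - 1 ≤ (s - y) ^ 2 := by
        nlinarith [sq_nonneg ((s - y) * 2 - (s - x₁)), sq_nonneg ((s - y) + (s - x₁))]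
      have : c * ((y - x₁) ^ 2 / 2 - 1) / (2 * t₀) ≤ c * ((s - y) ^ 2) / (2 * t₀) := by gcongr
      simp only [neg_mul, neg_div]
      linarith
    refine e1.trans (e2.trans (le_of_eq ?_))
    field_simp
    ring
  calc C * t ^ p * Real.exp (-c * ((s - y) ^ 2 + x₂ ^ 2) / t)
      ≤ C * P * Real.exp (c / (2 * t₀) + -(c / (4 * t₀)) * (y - x₁) ^ 2) := by gcongr
    _ = _ := by rw [Real.exp_add]; ring

theorem gauss_int (K : ℝ) {c : ℝ} (hc : 0 < c) (x : ℝ) :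
    MeasureTheory.Integrable (fun y : ℝ => K * Real.exp (-c * (y - x) ^ 2)) :=
  ((integrable_exp_neg_mul_sq hc).comp_sub_right x).const_mul K

theorem dE_cont (i : Fin 2) {c : ℝ} (hc : 0 < c) : Continuous fun y => dE i y c := by
  have h0 : ∀ y : ℝ, 2 * Real.pi * (y ^ 2 + c ^ 2) ≠ 0 := fun y => by positivity
  fin_cases i
  · simp only [dE]
    exact Continuous.div (by simpa using continuous_id') (by fun_prop) h0
  · simp only [dE]
    exact Continuous.div (by simpa using continuous_const) (by fun_prop) h0

theorem two_pi_ge : (1 : ℝ) ≤ 2 * Real.pi := by linarith [Real.pi_gt_three]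

theorem dE_bd (i : Fin 2) (y : ℝ) {c : ℝ} (hc : 0 < c) : |dE i y c| ≤ 1 / c := by
  have key : ∀ w : ℝ, w ^ 2 ≤ y ^ 2 + c ^ 2 →
      |w / (2 * Real.pi * (y ^ 2 + c ^ 2))| ≤ 1 / c := by
    intro w hw
    have hS : 0 < y ^ 2 + c ^ 2 := by positivity
    rw [abs_div, abs_of_pos (by positivity : 0 < 2 * Real.pi * (y ^ 2 + c ^ 2)),
      div_le_div_iff₀ (by positivity) hc]
    have h1 : |w| * c ≤ y ^ 2 + c ^ 2 := by
      have := sq_abs w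
      nlinarith [sq_nonneg (|w| - c), sq_nonneg y]
    nlinarith [two_pi_ge]
  unfold dE
  apply key
  split_ifs <;> nlinarith [sq_nonneg y, sq_nonneg c]

/-- `∂_{y₂}∂_iE` -/
noncomputable def dEd (i : Fin 2) (y₁ y₂ : ℝ) : ℝ :=
  (if i = 0 then -(2 * y₁ * y₂) else y₁ ^ 2 - y₂ ^ 2) / (2 * Real.pi * (y₁ ^ 2 + y₂ ^ 2) ^ 2)

theorem dEd_cont (i : Fin 2) {c : ℝ} (hc : 0 < c) : Continuous fun y => dEd i y c := by
  have h0 : ∀ y : ℝ, 2 * Real.pi * (y ^ 2 + c ^ 2) ^ 2 ≠ 0 := fun y => by positivity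
  fin_cases i
  · simp only [dEd]
    exact Continuous.div (by simp; fun_prop) (by fun_prop) h0
  · simp only [dEd]
    exact Continuous.div (by simp; fun_prop) (by fun_prop) h0

theorem dEd_bd (i : Fin 2) (y : ℝ) {c : ℝ} (hc : 0 < c) : |dEd i y c| ≤ 1 / c ^ 2 := by
  have key : ∀ w : ℝ, |w| ≤ y ^ 2 + c ^ 2 →
      |w / (2 * Real.pi * (y ^ 2 + c ^ 2) ^ 2)| ≤ 1 / c ^ 2 := by
    intro w hw
    have hS : 0 < y ^ 2 + c ^ 2 := by positivity
    rw [abs_div, abs_of_pos (by positivity : 0 < 2 * Real.pi * (y ^ 2 + c ^ 2) ^ 2),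
      div_le_div_iff₀ (by positivity) (by positivity)]
    have h1 : |w| * c ^ 2 ≤ (y ^ 2 + c ^ 2) ^ 2 := by
      have : |w| * c ^ 2 ≤ (y ^ 2 + c ^ 2) * (y ^ 2 + c ^ 2) := by
        gcongr
        nlinarith [sq_nonneg y]
      nlinarith
    nlinarith [two_pi_ge, sq_nonneg (y ^ 2 + c ^ 2)]
  unfold dEd
  apply key
  split_ifs <;> rw [abs_le] <;> constructor <;>
    nlinarith [sq_nonneg y, sq_nonneg c, sq_nonneg (y - c), sq_nonneg (y + c)]

theorem dE_zero (y c : ℝ) : dE 0 y c = y / (2 * Real.pi * (y ^ 2 + c ^ 2)) := by simp [dE]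
theorem dE_one (y c : ℝ) : dE 1 y c = c / (2 * Real.pi * (y ^ 2 + c ^ 2)) := by simp [dE]
theorem dEd_zero (y c : ℝ) :
    dEd 0 y c = -(2 * y * c) / (2 * Real.pi * (y ^ 2 + c ^ 2) ^ 2) := by simp [dEd]
theorem dEd_one (y c : ℝ) :
    dEd 1 y c = (y ^ 2 - c ^ 2) / (2 * Real.pi * (y ^ 2 + c ^ 2) ^ 2) := by simp [dEd]

theorem dE_hasDeriv2 (i : Fin 2) (y : ℝ) {c : ℝ} (hc : 0 < c) :
    HasDerivAt (fun s => dE i y s) (dEd i y c) c := by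
  have h0 : 2 * Real.pi * (y ^ 2 + c ^ 2) ≠ 0 := by positivity
  have hd : HasDerivAt (fun s : ℝ => 2 * Real.pi * (y ^ 2 + s ^ 2)) (2 * Real.pi * (2 * c)) c := by
    simpa using (((hasDerivAt_id c).pow 2).const_add (y ^ 2)).const_mul (2 * Real.pi)
  fin_cases i
  · have := (hasDerivAt_const c y).div hd h0
    simp only [Fin.zero_eta, dE_zero, dEd_zero]
    refine this.congr_deriv ?_
    field_simp
    ring
  · have := (hasDerivAt_id' c).div hd h0
    simp only [Fin.mk_one, dE_one, dEd_one]
    refine this.congr_deriv ?_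
    field_simp
    ring

theorem dE_hasDeriv1 (i : Fin 2) : ∃ (j : Fin 2) (ε : ℝ), |ε| = 1 ∧
    ∀ (y : ℝ) {c : ℝ} (_ : 0 < c), HasDerivAt (fun s => dE j s c) (ε * dEd i y c) y := by
  have hd : ∀ y c : ℝ,
      HasDerivAt (fun s : ℝ => 2 * Real.pi * (s ^ 2 + c ^ 2)) (2 * Real.pi * (2 * y)) y := by
    intro y c
    simpa using (((hasDerivAt_id y).pow 2).add_const (c ^ 2)).const_mul (2 * Real.pi)
  fin_cases i
  · refine ⟨1, 1, by simp, fun y c hc => ?_⟩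
    have h0 : 2 * Real.pi * (y ^ 2 + c ^ 2) ≠ 0 := by positivity
    have := (hasDerivAt_const y c).div (hd y c) h0
    simp only [Fin.zero_eta, dE_one, dEd_zero]
    refine this.congr_deriv ?_
    field_simp
    ring
  · refine ⟨0, -1, by simp, fun y c hc => ?_⟩
    have h0 : 2 * Real.pi * (y ^ 2 + c ^ 2) ≠ 0 := by positivity
    have := (hasDerivAt_id' y).div (hd y c) h0
    simp only [Fin.mk_one, dE_zero, dEd_one]
    refine this.congr_deriv ?_
    field_simp
    ring

theorem Sm.cont1 {f} (h : Sm f) (a b : ℝ) {d : ℝ} (hd : 0 < d) :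
    Continuous fun y => f (a - y) b d := by
  have : Continuous fun s => f s b d :=
    continuous_iff_continuousAt.2 fun s => (h.has1 hd).continuousAt
  fun_prop

theorem Sm.h1 {f} (h : Sm f) {a b c : ℝ} (hc : 0 < c) :
    HasDerivAt (fun s => f s b c) (D1₃ f a b c) a := (h.has1 hc).differentiableAt.hasDerivAt
theorem Sm.h2 {f} (h : Sm f) {a b c : ℝ} (hc : 0 < c) :
    HasDerivAt (fun s => f a s c) (D2₃ f a b c) b := (h.has2 hc).differentiableAt.hasDerivAt
theorem Sm.h3 {f} (h : Sm f) {a b c : ℝ} (hc : 0 < c) :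
    HasDerivAt (fun s => f a b s) (D3₃ f a b c) c := (h.has3 hc).differentiableAt.hasDerivAt

theorem Good.meas {r N} (h : Good r N) (i : Fin 2) (a b : ℝ) {c d : ℝ} (hc : 0 < c) (hd : 0 < d) :
    MeasureTheory.AEStronglyMeasurable (fun y => dE i y c * N (a - y) b d)
      MeasureTheory.volume :=
  ((dE_cont i hc).mul (h.sm.cont1 a b hd)).aestronglyMeasurable

theorem Good.bint {r N} (h : Good r N) {k : ℝ → ℝ} (hk : Continuous k) {B : ℝ}
    (hB : ∀ y, |k y| ≤ B) (a b : ℝ) {d : ℝ} (hd : 0 < d) :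
    MeasureTheory.Integrable (fun y => k y * N (a - y) b d) := by
  obtain ⟨K, c', hK, hc', H⟩ := h.locBd a hd
  have hB0 := (abs_nonneg _).trans (hB 0)
  refine (gauss_int (B * K) hc' a).mono' (hk.mul (h.sm.cont1 a b hd)).aestronglyMeasurable
    (Filter.Eventually.of_forall fun y => ?_)
  rw [Real.norm_eq_abs, abs_mul, mul_assoc]
  exact mul_le_mul (hB y) (H a (Metric.mem_ball_self one_pos) b d
    (Metric.mem_ball_self (by positivity)) y) (abs_nonneg _) hB0

theorem Good.J1 {r N} (h : Good r N) (i : Fin 2) (a b : ℝ) {c d : ℝ} (hc : 0 < c) (hd : 0 < d) :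
    HasDerivAt (fun s => Jint N i s b c d) (Jint (D1₃ N) i a b c d) a := by
  obtain ⟨K, c', hK, hc', H⟩ := h.D1.locBd a hd
  refine (hasDerivAt_integral_of_dominated_loc_of_deriv_le
    (F := fun s y => dE i y c * N (s - y) b d) (F' := fun s y => dE i y c * D1₃ N (s - y) b d)
    (s := Metric.ball a 1) (bound := fun y => 1 / c * K * Real.exp (-c' * (y - a) ^ 2))
    (Metric.ball_mem_nhds a one_pos)
    (Filter.Eventually.of_forall fun s => h.meas i s b hc hd)
    (h.bint (dE_cont i hc) (fun y => dE_bd i y hc) a b hd) (h.D1.meas i a b hc hd)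
    (Filter.Eventually.of_forall fun y s hs => ?_) (gauss_int _ hc' a)
    (Filter.Eventually.of_forall fun y s hs => ?_)).2
  · rw [Real.norm_eq_abs, abs_mul, mul_assoc]
    exact mul_le_mul (dE_bd i y hc) (H s hs b d
      (Metric.mem_ball_self (by positivity)) y) (abs_nonneg _) (by positivity)
  · have := (h.sm.h1 (a := s - y) (b := b) hd).comp s ((hasDerivAt_id s).sub_const y)
    simpa using this.const_mul (dE i y c)

theorem Good.J2 {r N} (h : Good r N) (i : Fin 2) (a b : ℝ) {c d : ℝ} (hc : 0 < c) (hd : 0 < d) :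
    HasDerivAt (fun s => Jint N i a s c d) (Jint (D2₃ N) i a b c d) b := by
  obtain ⟨K, c', hK, hc', H⟩ := h.D2.locBd a hd
  refine (hasDerivAt_integral_of_dominated_loc_of_deriv_le
    (F := fun s y => dE i y c * N (a - y) s d) (F' := fun s y => dE i y c * D2₃ N (a - y) s d)
    (s := Metric.ball b 1) (bound := fun y => 1 / c * K * Real.exp (-c' * (y - a) ^ 2))
    (Metric.ball_mem_nhds b one_pos)
    (Filter.Eventually.of_forall fun s => h.meas i a s hc hd)
    (h.bint (dE_cont i hc) (fun y => dE_bd i y hc) a b hd) (h.D2.meas i a b hc hd)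
    (Filter.Eventually.of_forall fun y s hs => ?_) (gauss_int _ hc' a)
    (Filter.Eventually.of_forall fun y s hs => ?_)).2
  · rw [Real.norm_eq_abs, abs_mul, mul_assoc]
    exact mul_le_mul (dE_bd i y hc) (H a (Metric.mem_ball_self one_pos) s d
      (Metric.mem_ball_self (by positivity)) y) (abs_nonneg _) (by positivity)
  · exact (h.sm.h2 (a := a - y) (b := s) hd).const_mul (dE i y c)

theorem Good.J4 {r N} (h : Good r N) (i : Fin 2) (a b : ℝ) {c d : ℝ} (hc : 0 < c) (hd : 0 < d) :
    HasDerivAt (fun s => Jint N i a b c s) (Jint (D3₃ N) i a b c d) d := by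
  obtain ⟨K, c', hK, hc', H⟩ := h.D3.locBd a hd
  refine (hasDerivAt_integral_of_dominated_loc_of_deriv_le
    (F := fun s y => dE i y c * N (a - y) b s) (F' := fun s y => dE i y c * D3₃ N (a - y) b s)
    (s := Metric.ball d (d / 2)) (bound := fun y => 1 / c * K * Real.exp (-c' * (y - a) ^ 2))
    (Metric.ball_mem_nhds d (by positivity))
    ((lt_mem_nhds hd).mono fun s hs => h.meas i a b hc hs)
    (h.bint (dE_cont i hc) (fun y => dE_bd i y hc) a b hd) (h.D3.meas i a b hc hd)
    (Filter.Eventually.of_forall fun y s hs => ?_) (gauss_int _ hc' a)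
    (Filter.Eventually.of_forall fun y s hs => ?_)).2
  · rw [Real.norm_eq_abs, abs_mul, mul_assoc]
    exact mul_le_mul (dE_bd i y hc) (H a (Metric.mem_ball_self one_pos) b s
      hs y) (abs_nonneg _) (by positivity)
  · rw [Metric.mem_ball, Real.dist_eq, abs_lt] at hs
    exact (h.sm.h3 (a := a - y) (b := b) (by linarith : 0 < s)).const_mul (dE i y c)

theorem Good.J3 {r N} (h : Good r N) (i : Fin 2) : ∃ (j : Fin 2) (ε : ℝ), |ε| = 1 ∧
    ∀ (a b : ℝ) {c d : ℝ} (_ : 0 < c) (_ : 0 < d),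
    HasDerivAt (fun s => Jint N i a b s d) (ε * Jint (D1₃ N) j a b c d) c := by
  obtain ⟨j, ε, hε, hj⟩ := dE_hasDeriv1 i
  refine ⟨j, ε, hε, fun a b c d hc hd => ?_⟩
  obtain ⟨K, c', hK, hc', H⟩ := h.locBd a hd
  have hεε : ε * ε = 1 := by rw [← abs_mul_abs_self, hε]; norm_num
  have main := (hasDerivAt_integral_of_dominated_loc_of_deriv_le
    (F := fun s y => dE i y s * N (a - y) b d) (F' := fun s y => dEd i y s * N (a - y) b d)
    (s := Metric.ball c (c / 2))
    (bound := fun y => 1 / (c / 2) ^ 2 * K * Real.exp (-c' * (y - a) ^ 2))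
    (x₀ := c) (μ := MeasureTheory.volume)
    (Metric.ball_mem_nhds c (by positivity))
    ((lt_mem_nhds hc).mono fun s hs => h.meas i a b hs hd)
    (h.bint (dE_cont i hc) (fun y => dE_bd i y hc) a b hd)
    ((dEd_cont i hc).mul (h.sm.cont1 a b hd)).aestronglyMeasurable
    (Filter.Eventually.of_forall fun y s hs => ?_) (gauss_int _ hc' a)
    (Filter.Eventually.of_forall fun y s hs => ?_)).2
  · have hIBP := MeasureTheory.integral_mul_deriv_eq_deriv_mul_of_integrable
      (u := fun y => dE j y c) (u' := fun y => ε * dEd i y c)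
      (v := fun y => N (a - y) b d) (v' := fun y => - D1₃ N (a - y) b d)
      (fun y _ => hj y hc) (fun y _ => ?_) ?_ ?_ ?_
    · refine main.congr_deriv ?_
      simp only [mul_neg, MeasureTheory.integral_neg, neg_inj] at hIBP
      simp only [Jint]
      rw [hIBP]
      simp only [mul_assoc, MeasureTheory.integral_const_mul]
      rw [← mul_assoc, hεε, one_mul]
    · have := (h.sm.h1 (a := a - y) (b := b) hd).comp y ((hasDerivAt_id y).const_sub a)
      exact this.congr_deriv (by ring)
    · have := (h.D1.bint (dE_cont j hc) (fun y => dE_bd j y hc) a b hd).neg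
      refine this.congr (Filter.Eventually.of_forall fun y => ?_)
      simp
    · have := (h.bint (dEd_cont i hc) (fun y => dEd_bd i y hc) a b hd).const_mul ε
      refine this.congr (Filter.Eventually.of_forall fun y => ?_)
      simp [mul_assoc]
    · exact h.bint (dE_cont j hc) (fun y => dE_bd j y hc) a b hd
  · rw [Metric.mem_ball, Real.dist_eq, abs_lt] at hs
    have hs0 : c / 2 ≤ s := by linarith
    rw [Real.norm_eq_abs, abs_mul, mul_assoc]
    refine mul_le_mul ((dEd_bd i y (by linarith)).trans ?_) (H a (Metric.mem_ball_self one_pos) b d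
      (Metric.mem_ball_self (by positivity)) y) (abs_nonneg _) (by positivity)
    gcongr
  · rw [Metric.mem_ball, Real.dist_eq, abs_lt] at hs
    exact (dE_hasDeriv2 i y (by linarith)).mul_const _

/-- `F` is, up to sign, one of the two potentials of `N` on the relevant region. -/
def PotRep (N : ℝ → ℝ → ℝ → ℝ) (F : ℝ → ℝ → ℝ → ℝ → ℝ) : Prop :=
  ∃ (j : Fin 2) (ε : ℝ), |ε| = 1 ∧ ∀ a b c d, 0 < c → 0 < d → F a b c d = ε * Jint N j a b c d

theorem PotRep.D1 {r N F} (h : Good r N) (hR : PotRep N F) : PotRep (D1₃ N) (D1₄ F) := by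
  obtain ⟨j, ε, hε, H⟩ := hR
  refine ⟨j, ε, hε, fun a b c d hc hd => ?_⟩
  have : (fun s => F s b c d) = fun s => ε * Jint N j s b c d := funext fun s => H s b c d hc hd
  simp only [D1₄, this]
  exact ((h.J1 j a b hc hd).const_mul ε).deriv

theorem PotRep.D2 {r N F} (h : Good r N) (hR : PotRep N F) : PotRep (D2₃ N) (D2₄ F) := by
  obtain ⟨j, ε, hε, H⟩ := hR
  refine ⟨j, ε, hε, fun a b c d hc hd => ?_⟩
  have : (fun s => F a s c d) = fun s => ε * Jint N j a s c d := funext fun s => H a s c d hc hd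
  simp only [D2₄, this]
  exact ((h.J2 j a b hc hd).const_mul ε).deriv

theorem PotRep.D4 {r N F} (h : Good r N) (hR : PotRep N F) : PotRep (D3₃ N) (D4₄ F) := by
  obtain ⟨j, ε, hε, H⟩ := hR
  refine ⟨j, ε, hε, fun a b c d hc hd => ?_⟩
  have : (fun s => F a b c s) =ᶠ[nhds d] fun s => ε * Jint N j a b c s :=
    (lt_mem_nhds hd).mono fun s hs => H a b c s hc hs
  simp only [D4₄, this.deriv_eq]
  exact ((h.J4 j a b hc hd).const_mul ε).deriv

theorem PotRep.D3 {r N F} (h : Good r N) (hR : PotRep N F) : PotRep (D1₃ N) (D3₄ F) := by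
  obtain ⟨j, ε, hε, H⟩ := hR
  obtain ⟨j', ε', hε', H'⟩ := h.J3 j
  refine ⟨j', ε * ε', by rw [abs_mul, hε, hε', one_mul], fun a b c d hc hd => ?_⟩
  have : (fun s => F a b s d) =ᶠ[nhds c] fun s => ε * Jint N j a b s d :=
    (lt_mem_nhds hc).mono fun s hs => H a b s d hs hd
  simp only [D3₄, this.deriv_eq]
  rw [((H' a b hc hd).const_mul ε).deriv, mul_assoc]

theorem PotRep.iter1 {r N F} (h : Good r N) (hR : PotRep N F) (n : ℕ) :
    PotRep (D1₃^[n] N) (D1₄^[n] F) := by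
  induction n generalizing r N F with
  | zero => exact hR
  | succ n ih => exact ih h.D1 (hR.D1 h)
theorem PotRep.iter2 {r N F} (h : Good r N) (hR : PotRep N F) (n : ℕ) :
    PotRep (D2₃^[n] N) (D2₄^[n] F) := by
  induction n generalizing r N F with
  | zero => exact hR
  | succ n ih => exact ih h.D2 (hR.D2 h)
theorem PotRep.iter3 {r N F} (h : Good r N) (hR : PotRep N F) (n : ℕ) :
    PotRep (D1₃^[n] N) (D3₄^[n] F) := by
  induction n generalizing r N F with
  | zero => exact hR
  | succ n ih => exact ih h.D1 (hR.D3 h)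
theorem PotRep.iter4 {r N F} (h : Good r N) (hR : PotRep N F) (n : ℕ) :
    PotRep (D3₃^[n] N) (D4₄^[n] F) := by
  induction n generalizing r N F with
  | zero => exact hR
  | succ n ih => exact ih h.D3 (hR.D4 h)

theorem PotRep.congr {N N' F} (h : EqT N N') (hR : PotRep N F) : PotRep N' F := by
  obtain ⟨j, ε, hε, H⟩ := hR
  refine ⟨j, ε, hε, fun a b c d hc hd => ?_⟩
  rw [H a b c d hc hd]
  simp only [Jint, h _ _ d hd]

theorem PotRep.main {r M} (h : Good r M) (i : Fin 2) (k₁ k₂ l s : ℕ) :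
    PotRep (D1₃^[k₁ + l] (D2₃^[k₂] (D3₃^[s] M)))
      (D1₄^[k₁] (D2₄^[k₂] (D3₄^[l] (D4₄^[s] (Jint M i))))) := by
  have h0 : PotRep M (Jint M i) := ⟨i, 1, by simp, fun a b c d _ _ => by simp⟩
  have h3 := h.iter3 s
  have := (((h0.iter4 h s).iter3 h3 l).iter2 (h3.iter1 l) k₂).iter1 ((h3.iter1 l).iter2 k₂) k₁
  refine this.congr ?_
  rw [Function.iterate_add_apply]
  refine iter_congr EqT.D1 k₁ ?_
  have key : ∀ (n m : ℕ) (f), Sm f → EqT (D2₃^[n] (D1₃^[m] f)) (D1₃^[m] (D2₃^[n] f)) := by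
    intro n m
    induction m with
    | zero => exact fun f _ => EqT.refl _
    | succ m ih =>
      intro f hf
      rw [Function.iterate_succ_apply, Function.iterate_succ_apply]
      exact (ih _ hf.D1).trans (iter_congr EqT.D1 m (iter_comm EqT.D2 Sm.D2 Sm.comm21 n hf))
  exact key _ _ _ h3.sm

/-! ### The one dimensional estimate -/

open MeasureTheory in
theorem poisson_int {y : ℝ} (hy : 0 < y) :
    Integrable (fun v : ℝ => y / (v ^ 2 + y ^ 2)) ∧ ∫ v : ℝ, y / (v ^ 2 + y ^ 2) = Real.pi := by
  have e : (fun v : ℝ => y / (v ^ 2 + y ^ 2)) = fun v => y⁻¹ * (1 + (v / y) ^ 2)⁻¹ := by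
    funext v
    field_simp
    ring
  rw [e]
  constructor
  · exact (integrable_inv_one_add_sq.comp_div hy.ne').const_mul _
  · rw [integral_const_mul, Measure.integral_comp_div (fun w : ℝ => (1 + w ^ 2)⁻¹) y,
      integral_univ_inv_one_add_sq, abs_of_pos hy, smul_eq_mul]
    field_simp

open MeasureTheory in
theorem P1_bd {g : ℝ → ℝ} {A : ℝ} (hA : ∀ u, |g u| ≤ A) (x : ℝ) {y : ℝ} (hy : 0 < y) :
    |∫ v, dE 1 v y * g (x - v)| ≤ A := by
  have hA0 := (abs_nonneg _).trans (hA 0)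
  obtain ⟨h1, h2⟩ := poisson_int hy
  have := norm_integral_le_of_norm_le (f := fun v => dE 1 v y * g (x - v))
    (h1.const_mul (A / (2 * Real.pi))) (Filter.Eventually.of_forall fun v => by
      rw [Real.norm_eq_abs, abs_mul, dE_one, abs_of_nonneg (by positivity)]
      calc y / (2 * Real.pi * (v ^ 2 + y ^ 2)) * |g (x - v)|
          ≤ y / (2 * Real.pi * (v ^ 2 + y ^ 2)) * A := by gcongr; exact hA _
        _ = _ := by field_simp)
  rw [integral_const_mul, h2, Real.norm_eq_abs] at this
  refine this.trans ?_
  have := Real.pi_pos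
  have e : A / (2 * Real.pi) * Real.pi = A / 2 := by field_simp
  rw [e]; linarith

open MeasureTheory in
theorem P0_bd {g g' : ℝ → ℝ} {A : ℝ} (hi : Integrable g) (hc : ∀ u, HasDerivAt g (g' u) u)
    (hg' : ∀ u, |g' u| ≤ A) (hI : ∫ u, |g u| ≤ A) (x : ℝ) {y : ℝ} (hy : 0 < y) :
    |∫ v, dE 0 v y * g (x - v)| ≤ 3 * A := by
  have hA0 := (abs_nonneg _).trans (hg' 0)
  have hlip : ∀ a b, |g a - g b| ≤ A * |a - b| := by
    intro a b
    have := Convex.norm_image_sub_le_of_norm_hasDerivWithin_le (f := g) (f' := g') (C := A)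
      (s := Set.univ) (x := b) (y := a) (fun u _ => (hc u).hasDerivWithinAt)
      (fun u _ => hg' u) convex_univ trivial trivial
    simpa using this
  have i1 : Integrable fun v => g (x - v) := hi.comp_sub_left x
  have i2 : Integrable fun v => g (x + v) := hi.comp_add_left x
  have hd : ∀ᵐ v ∂(volume : Measure ℝ), ‖dE 0 v y‖ ≤ 1 / y :=
    Filter.Eventually.of_forall fun v => dE_bd 0 v hy
  have j1 : Integrable fun v => dE 0 v y * g (x - v) :=
    i1.bdd_mul (dE_cont 0 hy).aestronglyMeasurable hd
  have j2 : Integrable fun v => dE 0 v y * g (x + v) :=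
    i2.bdd_mul (dE_cont 0 hy).aestronglyMeasurable hd
  have e1 : ∫ v, dE 0 v y * g (x - v) = - ∫ v, dE 0 v y * g (x + v) := by
    rw [← integral_neg_eq_self, ← integral_neg]
    congr 1
    funext v
    simp only [dE_zero]
    rw [neg_sq, sub_neg_eq_add]
    ring
  have e2 : 2 * ∫ v, dE 0 v y * g (x - v) = ∫ v, dE 0 v y * (g (x - v) - g (x + v)) := by
    simp only [mul_sub]
    rw [integral_sub j1 j2]
    linarith
  have hind : Integrable (Set.indicator (Set.Icc (-1 : ℝ) 1) fun _ => 2 * A) := by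
    rw [integrable_indicator_iff measurableSet_Icc]
    exact integrableOn_const (by simp)
  have b := norm_integral_le_of_norm_le (f := fun v => dE 0 v y * (g (x - v) - g (x + v)))
    ((hind.add i1.abs).add i2.abs) (Filter.Eventually.of_forall fun v => by
      rw [Real.norm_eq_abs, abs_mul]
      simp only [Pi.add_apply]
      by_cases hv : v ∈ Set.Icc (-1 : ℝ) 1
      · rw [Set.indicator_of_mem hv]
        have h1 := hlip (x - v) (x + v)
        have h2 : |x - v - (x + v)| = 2 * |v| := by
          rw [show x - v - (x + v) = -(2 * v) by ring, abs_neg, abs_mul]; norm_num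
        rw [h2] at h1
        have h3 : |dE 0 v y| * |v| ≤ 1 := by
          rw [dE_zero, abs_div, abs_of_pos (by positivity : 0 < 2 * Real.pi * (v ^ 2 + y ^ 2)),
            div_mul_eq_mul_div, div_le_one (by positivity), abs_mul_abs_self]
          nlinarith [two_pi_ge, sq_nonneg v, sq_nonneg y]
        have h4 : |dE 0 v y| * |g (x - v) - g (x + v)| ≤ 2 * A := by
          calc _ ≤ |dE 0 v y| * (A * (2 * |v|)) := by gcongr
            _ = 2 * A * (|dE 0 v y| * |v|) := by ring
            _ ≤ 2 * A * 1 := by gcongr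
            _ = _ := by ring
        have := abs_nonneg (g (x - v)); have := abs_nonneg (g (x + v))
        linarith
      · rw [Set.indicator_of_notMem hv]
        have hv1 : 1 ≤ v ^ 2 := by
          by_contra hcon
          apply hv
          constructor <;> nlinarith
        have h3 : |dE 0 v y| ≤ 1 := by
          rw [dE_zero, abs_div, abs_of_pos (by positivity : 0 < 2 * Real.pi * (v ^ 2 + y ^ 2)),
            div_le_one (by positivity)]
          have : |v| ≤ v ^ 2 := by
            rw [← sq_abs]; rw [← sq_abs] at hv1
            nlinarith [abs_nonneg v]
          nlinarith [two_pi_ge, sq_nonneg v, sq_nonneg y]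
        calc _ ≤ 1 * (|g (x - v)| + |g (x + v)|) := by
              gcongr
              exact abs_sub _ _
          _ = _ := by ring)
  rw [← e2] at b
  have i3 : ∫ v, |g (x - v)| = ∫ v, |g v| := integral_sub_left_eq_self (fun u => |g u|) volume x
  have i4 : ∫ v, |g (x + v)| = ∫ v, |g v| := integral_add_left_eq_self (fun u => |g u|) x
  have i5 : ∫ v, Set.indicator (Set.Icc (-1 : ℝ) 1) (fun _ => 2 * A) v = 4 * A := by
    rw [integral_indicator measurableSet_Icc]
    simp
    ring
  have i6 : ∫ v, (Set.indicator (Set.Icc (-1 : ℝ) 1) (fun _ => 2 * A) v + |g (x - v)| + |g (x + v)|)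
      = 4 * A + (∫ v, |g v|) + ∫ v, |g v| := by
    have q1 : ∫ v, (Set.indicator (Set.Icc (-1 : ℝ) 1) (fun _ => 2 * A) v + |g (x - v)| + |g (x + v)|)
        = (∫ v, (Set.indicator (Set.Icc (-1 : ℝ) 1) (fun _ => 2 * A) v + |g (x - v)|))
          + ∫ v, |g (x + v)| := integral_add (hind.add i1.abs) i2.abs
    rw [q1, integral_add hind i1.abs, i3, i4, i5]
  have b' : ‖2 * ∫ v, dE 0 v y * g (x - v)‖ ≤ 4 * A + (∫ v, |g v|) + ∫ v, |g v| := i6 ▸ b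
  rw [Real.norm_eq_abs, abs_mul, abs_two] at b'
  linarith

/-- The Cauchy transform. -/
noncomputable def Cau (g : ℝ → ℝ) (x y : ℝ) : ℂ :=
  ∫ v : ℝ, (g (x - v) : ℂ) / ((v : ℂ) + y * Complex.I)

theorem den_ne (v : ℝ) {y : ℝ} (hy : 0 < y) : (v : ℂ) + y * Complex.I ≠ 0 := by
  intro h
  have := congrArg Complex.im h
  simp at this
  exact hy.ne' this

theorem inv_den (v : ℝ) {y : ℝ} (hy : 0 < y) : ((v : ℂ) + y * Complex.I)⁻¹
    = 2 * Real.pi * ((dE 0 v y : ℂ) - Complex.I * dE 1 v y) := by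
  have h1 := den_ne v hy
  have h2 : (2 * Real.pi * (v ^ 2 + y ^ 2) : ℝ) ≠ 0 := by positivity
  have h3 : ((v : ℂ) ^ 2 + (y : ℂ) ^ 2) ≠ 0 := by
    have : (v ^ 2 + y ^ 2 : ℝ) ≠ 0 := by positivity
    exact_mod_cast this
  have h4 : (Real.pi : ℂ) ≠ 0 := by exact_mod_cast Real.pi_ne_zero
  rw [dE_zero, dE_one]
  push_cast
  symm
  apply eq_inv_of_mul_eq_one_left
  field_simp
  linear_combination (-(y : ℂ) ^ 2) * Complex.I_sq

open MeasureTheory in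
theorem Cau_eq {g : ℝ → ℝ} (hi : Integrable g) (x : ℝ) {y : ℝ} (hy : 0 < y) :
    Cau g x y = 2 * Real.pi * (((∫ v, dE 0 v y * g (x - v) : ℝ) : ℂ)
      - Complex.I * ((∫ v, dE 1 v y * g (x - v) : ℝ) : ℂ)) := by
  have i1 : Integrable fun v => g (x - v) := hi.comp_sub_left x
  have hj : ∀ i, Integrable fun v => dE i v y * g (x - v) := fun i =>
    i1.bdd_mul (dE_cont i hy).aestronglyMeasurable
      (Filter.Eventually.of_forall fun v => dE_bd i v hy)
  rw [← integral_complex_ofReal, ← integral_complex_ofReal, ← integral_const_mul,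
    ← integral_sub (hj 0).ofReal ((hj 1).ofReal.const_mul _), ← integral_const_mul]
  unfold Cau
  congr 1
  funext v
  rw [div_eq_mul_inv, inv_den v hy]
  push_cast
  ring

open MeasureTheory in
theorem P_le_Cau {g : ℝ → ℝ} (hi : Integrable g) (i : Fin 2) (x : ℝ) {y : ℝ} (hy : 0 < y) :
    |∫ v, dE i v y * g (x - v)| ≤ ‖Cau g x y‖ := by
  rw [Cau_eq hi x hy]
  set a := ∫ v, dE 0 v y * g (x - v)
  set b := ∫ v, dE 1 v y * g (x - v)
  have e : ‖(2 * Real.pi * ((a : ℂ) - Complex.I * b) : ℂ)‖ = 2 * Real.pi * ‖(a : ℂ) - Complex.I * b‖ := by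
    rw [norm_mul, norm_mul, Complex.norm_real, Real.norm_of_nonneg Real.pi_pos.le]
    simp
  rw [e]
  have h1 : ‖(a : ℂ) - Complex.I * b‖ ≤ 2 * Real.pi * ‖(a : ℂ) - Complex.I * b‖ := by
    nlinarith [two_pi_ge, norm_nonneg ((a : ℂ) - Complex.I * b)]
  refine le_trans ?_ h1
  fin_cases i
  · have := Complex.abs_re_le_norm ((a : ℂ) - Complex.I * b)
    simpa using this
  · have := Complex.abs_im_le_norm ((a : ℂ) - Complex.I * b)
    simpa using this

open MeasureTheory in
theorem Cau_bd {c : ℝ} (hc : 0 < c) : ∃ K > (0 : ℝ), ∀ (B : ℝ) (g g' : ℝ → ℝ),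
    (∀ u, HasDerivAt g (g' u) u) → (∀ u, |g u| ≤ B * Real.exp (-c * u ^ 2)) →
    (∀ u, |g' u| ≤ B * Real.exp (-c * u ^ 2)) → ∀ x y : ℝ, 0 < y → ‖Cau g x y‖ ≤ K * B := by
  set G := ∫ u : ℝ, Real.exp (-c * u ^ 2)
  have hG : 0 ≤ G := integral_nonneg fun u => (Real.exp_pos _).le
  refine ⟨2 * Real.pi * (3 * (1 + G) + 1), by positivity, fun B g g' hd hg hg' x y hy => ?_⟩
  have hB : 0 ≤ B := by
    have := (abs_nonneg _).trans (hg 0)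
    simpa using this
  have hgc : Continuous g := continuous_iff_continuousAt.2 fun u => (hd u).continuousAt
  have hgi : Integrable (fun u : ℝ => B * Real.exp (-c * u ^ 2)) :=
    (integrable_exp_neg_mul_sq hc).const_mul B
  have hi : Integrable g := hgi.mono' hgc.aestronglyMeasurable (Filter.Eventually.of_forall hg)
  have hle : ∀ u : ℝ, B * Real.exp (-c * u ^ 2) ≤ B := fun u => by
    have : Real.exp (-c * u ^ 2) ≤ 1 := Real.exp_le_one_iff.2 (by nlinarith [sq_nonneg u])
    nlinarith
  have hI : ∫ u, |g u| ≤ B * G := by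
    rw [← integral_const_mul]
    exact integral_mono hi.abs hgi hg
  have h0 := P0_bd (A := B * (1 + G)) hi hd (fun u => (hg' u).trans ((hle u).trans (by nlinarith)))
    (by nlinarith) x hy
  have h1 := P1_bd (fun u => (hg u).trans (hle u)) x hy
  rw [Cau_eq hi x hy]
  set a := ∫ v, dE 0 v y * g (x - v)
  set b := ∫ v, dE 1 v y * g (x - v)
  have e : ‖(2 * Real.pi * ((a : ℂ) - Complex.I * b) : ℂ)‖ = 2 * Real.pi * ‖(a : ℂ) - Complex.I * b‖ := by
    rw [norm_mul, norm_mul, Complex.norm_real, Real.norm_of_nonneg Real.pi_pos.le]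
    simp
  have e2 : ‖(a : ℂ) - Complex.I * b‖ ≤ |a| + |b| := by
    refine (norm_sub_le _ _).trans ?_
    simp
  rw [e, mul_assoc (2 * Real.pi)]
  refine mul_le_mul_of_nonneg_left ?_ (by positivity)
  nlinarith

open MeasureTheory in
theorem Cau_step {g : ℝ → ℝ} (hi : Integrable g) (hi' : Integrable fun u => u * g u)
    (x : ℝ) {y : ℝ} (hy : 0 < y) :
    ((x : ℂ) + y * Complex.I) * Cau g x y
      = ((∫ u, g u : ℝ) : ℂ) + Cau (fun u => u * g u) x y := by
  have i1 : Integrable fun v => g (x - v) := hi.comp_sub_left x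
  have i2 : Integrable fun v => (x - v) * g (x - v) := hi'.comp_sub_left x
  have hden : Continuous fun v : ℝ => ((v : ℂ) + y * Complex.I)⁻¹ :=
    Continuous.inv₀ (by fun_prop) fun v => den_ne v hy
  have hbd : ∀ v : ℝ, ‖((v : ℂ) + y * Complex.I)⁻¹‖ ≤ 1 / y := fun v => by
    rw [norm_inv, one_div]
    have := Complex.abs_im_le_norm ((v : ℂ) + y * Complex.I)
    simp only [Complex.add_im, Complex.ofReal_im, Complex.mul_im, Complex.ofReal_re, Complex.I_im,
      Complex.I_re, mul_one, mul_zero, zero_add, add_zero, abs_of_pos hy] at this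
    gcongr
  have j2 : Integrable fun v : ℝ => (((x - v) * g (x - v) : ℝ) : ℂ) / ((v : ℂ) + y * Complex.I) := by
    simp only [div_eq_mul_inv]
    exact i2.ofReal.mul_bdd hden.aestronglyMeasurable (Filter.Eventually.of_forall hbd)
  rw [← integral_sub_left_eq_self g volume x, ← integral_complex_ofReal]
  unfold Cau
  have q1 : (∫ v : ℝ, (g (x - v) : ℂ)) +
      ∫ v : ℝ, (((x - v) * g (x - v) : ℝ) : ℂ) / ((v : ℂ) + y * Complex.I)
      = ∫ v : ℝ, ((g (x - v) : ℂ) + (((x - v) * g (x - v) : ℝ) : ℂ) / ((v : ℂ) + y * Complex.I)) :=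
    (integral_add i1.ofReal j2).symm
  refine Eq.trans ?_ q1.symm
  rw [← integral_const_mul]
  congr 1
  funext v
  have := den_ne v hy
  field_simp
  push_cast
  ring

theorem pow_le_gauss (k : ℕ) {c : ℝ} (hc : 0 < c) (u : ℝ) :
    |u| ^ k ≤ (1 + (2 / c) ^ k * k.factorial) * Real.exp (c / 2 * u ^ 2) := by
  have h1 : |u| ^ k ≤ 1 + (u ^ 2) ^ k := by
    rw [← sq_abs, ← pow_mul, mul_comm, pow_mul]
    nlinarith [sq_nonneg (|u| ^ k - 1)]
  have h2 := Real.pow_div_factorial_le_exp (c / 2 * u ^ 2) (by positivity) k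
  rw [div_le_iff₀ (by positivity)] at h2
  have h3 : (u ^ 2) ^ k = (2 / c) ^ k * (c / 2 * u ^ 2) ^ k := by
    rw [← mul_pow]; congr 1; field_simp
  have h4 : 1 ≤ Real.exp (c / 2 * u ^ 2) := Real.one_le_exp (by positivity)
  rw [h3] at h1
  have h5 : (2 / c) ^ k * (c / 2 * u ^ 2) ^ k
      ≤ (2 / c) ^ k * (Real.exp (c / 2 * u ^ 2) * k.factorial) := by gcongr
  nlinarith

theorem pow_mul_gauss (k : ℕ) {c : ℝ} (hc : 0 < c) {B a : ℝ} (u : ℝ)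
    (h : |a| ≤ B * Real.exp (-c * u ^ 2)) :
    |u ^ k * a| ≤ (1 + (2 / c) ^ k * k.factorial) * B * Real.exp (-(c / 2) * u ^ 2) := by
  rw [abs_mul, abs_pow]
  have hB : 0 ≤ B := by
    have := (abs_nonneg _).trans h
    exact nonneg_of_mul_nonneg_left this (Real.exp_pos _)
  calc |u| ^ k * |a| ≤ ((1 + (2 / c) ^ k * k.factorial) * Real.exp (c / 2 * u ^ 2)) *
        (B * Real.exp (-c * u ^ 2)) := by gcongr; exact pow_le_gauss k hc u
    _ = (1 + (2 / c) ^ k * k.factorial) * B *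
        (Real.exp (c / 2 * u ^ 2) * Real.exp (-c * u ^ 2)) := by ring
    _ = _ := by rw [← Real.exp_add]; congr 2; ring

open MeasureTheory in
theorem pow_integrable (k : ℕ) {c : ℝ} (hc : 0 < c) {B : ℝ} {g : ℝ → ℝ} (hg : Continuous g)
    (h : ∀ u, |g u| ≤ B * Real.exp (-c * u ^ 2)) : Integrable fun u => u ^ k * g u :=
  ((integrable_exp_neg_mul_sq (half_pos hc)).const_mul _).mono'
    (by fun_prop) (Filter.Eventually.of_forall fun u => pow_mul_gauss k hc u (h u))

theorem itd {φ : ℝ → ℝ} (hφ : ContDiff ℝ (⊤ : ℕ∞) φ) (m : ℕ) (u : ℝ) :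
    HasDerivAt (iteratedDeriv m φ) (iteratedDeriv (m + 1) φ u) u := by
  rw [iteratedDeriv_succ]
  exact ((hφ.differentiable_iteratedDeriv m (by exact_mod_cast WithTop.coe_lt_top m)) u).hasDerivAt

open MeasureTheory in
theorem moment_zero {φ : ℝ → ℝ} (hφ : ContDiff ℝ (⊤ : ℕ∞) φ) {c : ℝ} (hc : 0 < c) {B : ℝ} (k : ℕ) :
    ∀ n, k < n → (∀ m ≤ n, ∀ u, |iteratedDeriv m φ u| ≤ B * Real.exp (-c * u ^ 2)) →
      ∫ u, u ^ k * iteratedDeriv n φ u = 0 := by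
  have hcont : ∀ m, Continuous (iteratedDeriv m φ) := fun m =>
    continuous_iff_continuousAt.2 fun u => (itd hφ m u).continuousAt
  induction k with
  | zero =>
    intro n hn H
    obtain ⟨n, rfl⟩ : ∃ m, n = m + 1 := ⟨n - 1, by omega⟩
    simp only [pow_zero, one_mul]
    have i0 := pow_integrable 0 hc (hcont n) (H n (by omega))
    have i1 := pow_integrable 0 hc (hcont (n + 1)) (H (n + 1) le_rfl)
    simp only [pow_zero, one_mul] at i0 i1
    exact integral_eq_zero_of_hasDerivAt_of_integrable (itd hφ n) i1 i0
  | succ k ih =>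
    intro n hn H
    obtain ⟨n, rfl⟩ : ∃ m, n = m + 1 := ⟨n - 1, by omega⟩
    have i0 := pow_integrable (k + 1) hc (hcont n) (H n (by omega))
    have i1 := pow_integrable (k + 1) hc (hcont (n + 1)) (H (n + 1) le_rfl)
    have i2 := (pow_integrable k hc (hcont n) (H n (by omega))).const_mul ((k : ℝ) + 1)
    have h0 := integral_eq_zero_of_hasDerivAt_of_integrable
      (f := fun u => u ^ (k + 1) * iteratedDeriv n φ u)
      (f' := fun u => ((k : ℝ) + 1) * (u ^ k * iteratedDeriv n φ u)
        + u ^ (k + 1) * iteratedDeriv (n + 1) φ u)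
      (fun u => by
        refine ((hasDerivAt_pow (k + 1) u).mul (itd hφ n u)).congr_deriv ?_
        push_cast
        simp
        ring) (i2.add i1) i0
    rw [integral_add i2 i1, integral_const_mul,
      ih n (by omega) (fun m hm => H m (by omega))] at h0
    linarith

open MeasureTheory in
theorem oneD (n : ℕ) {c : ℝ} (hc : 0 < c) : ∃ K > (0 : ℝ), ∀ (B : ℝ) (φ : ℝ → ℝ),
    ContDiff ℝ (⊤ : ℕ∞) φ →
    (∀ m ≤ n + 1, ∀ u, |iteratedDeriv m φ u| ≤ B * Real.exp (-c * u ^ 2)) →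
    ∀ (i : Fin 2) (x y : ℝ), 0 < y →
      (1 + ‖(x : ℂ) + y * Complex.I‖ ^ (n + 1)) *
        |∫ v, dE i v y * iteratedDeriv n φ (x - v)| ≤ K * B := by
  obtain ⟨K₁, hK₁, H₁⟩ := Cau_bd hc
  obtain ⟨K₂, hK₂, H₂⟩ := Cau_bd (half_pos hc)
  set G := ∫ u : ℝ, Real.exp (-(c / 2) * u ^ 2)
  have hG : 0 ≤ G := integral_nonneg fun u => (Real.exp_pos _).le
  set a := (1 + (2 / c) ^ n * n.factorial) with ha
  set b := (1 + (2 / c) ^ (n + 1) * (n + 1).factorial) with hb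
  have ha0 : 0 < a := by positivity
  have hb0 : 0 < b := by positivity
  refine ⟨K₁ + (a * G + K₂ * (b + (n + 1) * a + b)), by positivity, ?_⟩
  intro B φ hφ H i x y hy
  have hB : 0 ≤ B := by
    have := (abs_nonneg _).trans (H 0 (by omega) 0)
    simpa using this
  set g := iteratedDeriv n φ with hgdef
  have hcont : ∀ m, Continuous (iteratedDeriv m φ) := fun m =>
    continuous_iff_continuousAt.2 fun u => (itd hφ m u).continuousAt
  have hmom : ∀ k, Integrable fun u => u ^ k * g u := fun k =>
    pow_integrable k hc (hcont n) (H n (by omega))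
  have hgi : Integrable g := by simpa using hmom 0
  set z : ℂ := (x : ℂ) + y * Complex.I with hz
  have step : ∀ k, z * Cau (fun u => u ^ k * g u) x y
      = ((∫ u, u ^ k * g u : ℝ) : ℂ) + Cau (fun u => u ^ (k + 1) * g u) x y := by
    intro k
    have e : (fun u : ℝ => u ^ (k + 1) * g u) = fun u => u * (u ^ k * g u) := by
      funext u; ring
    rw [e]
    exact Cau_step (hmom k) (by rw [← e]; exact hmom (k + 1)) x hy
  have pw : ∀ k ≤ n, z ^ k * Cau g x y = Cau (fun u => u ^ k * g u) x y := by
    intro k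
    induction k with
    | zero => intro _; simp
    | succ k ih =>
      intro hk
      rw [pow_succ', mul_assoc, ih (by omega), step,
        moment_zero hφ hc k n (by omega) (fun m hm => H m (by omega))]
      simp
  have fin : z ^ (n + 1) * Cau g x y
      = ((∫ u, u ^ n * g u : ℝ) : ℂ) + Cau (fun u => u ^ (n + 1) * g u) x y := by
    rw [pow_succ', mul_assoc, pw n le_rfl, step]
  have c1 : ‖Cau g x y‖ ≤ K₁ * B := H₁ B g _ (itd hφ n) (H n (by omega)) (H (n + 1) le_rfl) x y hy
  have c2 : ‖((∫ u, u ^ n * g u : ℝ) : ℂ)‖ ≤ a * G * B := by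
    rw [Complex.norm_real]
    have := norm_integral_le_of_norm_le (f := fun u => u ^ n * g u)
      ((integrable_exp_neg_mul_sq (half_pos hc)).const_mul (a * B))
      (Filter.Eventually.of_forall fun u => pow_mul_gauss n hc u (H n (by omega) u))
    rw [integral_const_mul] at this
    refine this.trans (le_of_eq ?_)
    ring
  have c3 : ‖Cau (fun u => u ^ (n + 1) * g u) x y‖ ≤ K₂ * ((b + (n + 1) * a + b) * B) := by
    refine H₂ _ _ (fun u => ((n : ℝ) + 1) * (u ^ n * g u) + u ^ (n + 1) * iteratedDeriv (n + 1) φ u)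
      (fun u => ?_) (fun u => ?_) (fun u => ?_) x y hy
    · refine ((hasDerivAt_pow (n + 1) u).mul (itd hφ n u)).congr_deriv ?_
      push_cast
      simp [hgdef]
      ring
    · refine (pow_mul_gauss (n + 1) hc u (H n (by omega) u)).trans ?_
      rw [← hb]
      refine mul_le_mul_of_nonneg_right (mul_le_mul_of_nonneg_right ?_ hB) (Real.exp_pos _).le
      nlinarith [show (0 : ℝ) ≤ (n + 1) * a by positivity]
    · have h1 := pow_mul_gauss n hc u (H n (by omega) u)
      have h2 := pow_mul_gauss (n + 1) hc u (H (n + 1) le_rfl u)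
      rw [← ha] at h1
      rw [← hb] at h2
      have h3 := abs_add_le (((n : ℝ) + 1) * (u ^ n * g u)) (u ^ (n + 1) * iteratedDeriv (n + 1) φ u)
      have h4 : |((n : ℝ) + 1) * (u ^ n * g u)| ≤ (n + 1) * (a * B * Real.exp (-(c / 2) * u ^ 2)) := by
        rw [abs_mul, abs_of_nonneg (by positivity : (0 : ℝ) ≤ n + 1)]
        gcongr
      have h5 : 0 ≤ b * B * Real.exp (-(c / 2) * u ^ 2) := by positivity
      nlinarith
  have c4 : ‖z‖ ^ (n + 1) * ‖Cau g x y‖ ≤ a * G * B + K₂ * ((b + (n + 1) * a + b) * B) := by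
    rw [← norm_pow, ← norm_mul, fin]
    exact (norm_add_le _ _).trans (add_le_add c2 c3)
  have c5 := P_le_Cau hgi i x hy
  calc _ ≤ (1 + ‖z‖ ^ (n + 1)) * ‖Cau g x y‖ := by gcongr
    _ = ‖Cau g x y‖ + ‖z‖ ^ (n + 1) * ‖Cau g x y‖ := by ring
    _ ≤ _ := by nlinarith

open MeasureTheory in
theorem oneD_scaled (n : ℕ) {c : ℝ} (hc : 0 < c) : ∃ K > (0 : ℝ), ∀ (B τ : ℝ) (φ : ℝ → ℝ), 0 < τ →
    ContDiff ℝ (⊤ : ℕ∞) φ →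
    (∀ m ≤ n + 1, ∀ u, τ ^ m * |iteratedDeriv m φ u| ≤ B * Real.exp (-c * (u / τ) ^ 2)) →
    ∀ (i : Fin 2) (x y : ℝ), 0 < y →
      (τ ^ (n + 1) + √(x ^ 2 + y ^ 2) ^ (n + 1)) *
        |∫ v, dE i v y * iteratedDeriv n φ (x - v)| ≤ K * B * τ := by
  obtain ⟨K, hK, H⟩ := oneD n hc
  refine ⟨K, hK, fun B τ φ hτ hφ hb i x y hy => ?_⟩
  have hψ : ContDiff ℝ (⊤ : ℕ∞) fun w => φ (τ * w) := hφ.comp (contDiff_const.mul contDiff_id)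
  have hit : ∀ m w, iteratedDeriv m (fun w => φ (τ * w)) w = τ ^ m * iteratedDeriv m φ (τ * w) := by
    intro m w
    have := iteratedDeriv_comp_const_mul (n := m) (hφ.of_le (by exact_mod_cast le_top)) τ
    exact congrFun this w
  have h1 := H B _ hψ (fun m hm u => by
    rw [hit, abs_mul, abs_of_pos (by positivity)]
    have := hb m hm (τ * u)
    rwa [mul_div_cancel_left₀ _ hτ.ne'] at this) i (x / τ) (y / τ) (by positivity)
  have hE : ∀ w, dE i (τ * w) y = τ⁻¹ * dE i w (y / τ) := by
    intro w
    fin_cases i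
    · simp only [Fin.zero_eta, dE_zero]
      field_simp
    · simp only [Fin.mk_one, dE_one]
      field_simp
  have hcv : ∫ w, dE i w (y / τ) * iteratedDeriv n (fun w => φ (τ * w)) (x / τ - w)
      = τ ^ n * ∫ v, dE i v y * iteratedDeriv n φ (x - v) := by
    have := Measure.integral_comp_mul_left (fun v => dE i v y * iteratedDeriv n φ (x - v)) τ
    rw [abs_of_pos (by positivity), smul_eq_mul] at this
    have e : ∀ w, dE i w (y / τ) * iteratedDeriv n (fun w => φ (τ * w)) (x / τ - w)
        = τ ^ n * τ * (dE i (τ * w) y * iteratedDeriv n φ (x - τ * w)) := by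
      intro w
      rw [hit, hE, mul_sub, mul_div_cancel₀ _ hτ.ne']
      field_simp
    simp only [e]
    rw [integral_const_mul, this]
    field_simp
  have hz : ‖((x / τ : ℝ) : ℂ) + (y / τ : ℝ) * Complex.I‖ = √(x ^ 2 + y ^ 2) / τ := by
    rw [Complex.norm_add_mul_I, div_pow, div_pow, ← add_div, Real.sqrt_div (by positivity),
      Real.sqrt_sq hτ.le]
  rw [hcv, hz, abs_mul, abs_of_pos (by positivity : 0 < τ ^ n)] at h1
  have h2 := mul_le_mul_of_nonneg_right h1 hτ.le
  refine le_trans (le_of_eq ?_) h2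
  rw [div_pow]
  field_simp
  try ring

theorem D1_iter (N : ℝ → ℝ → ℝ → ℝ) (n : ℕ) (x b t : ℝ) :
    (D1₃^[n] N) x b t = iteratedDeriv n (fun u => N u b t) x := by
  induction n generalizing x with
  | zero => simp
  | succ n ih =>
    rw [Function.iterate_succ_apply', iteratedDeriv_succ]
    simp only [D1₃]
    congr 1
    funext s
    exact ih s

theorem Good.bd_unif {r N} (h : Good r N) (n : ℕ) : ∃ C > (0 : ℝ), ∃ c > (0 : ℝ), ∀ m ≤ n,
    ∀ (x₁ x₂ : ℝ), ∀ t > (0 : ℝ), |(D1₃^[m] N) x₁ x₂ t|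
        ≤ C * t ^ ((r - (m : ℝ)) / 2) * Real.exp (-c * (x₁ ^ 2 + x₂ ^ 2) / t) := by
  have h1 : ∀ m : ℕ, ∃ C > (0 : ℝ), ∃ c > (0 : ℝ),
      ∀ (x₁ x₂ : ℝ), ∀ t > (0 : ℝ), |(D1₃^[m] N) x₁ x₂ t|
        ≤ C * t ^ ((r - (m : ℝ)) / 2) * Real.exp (-c * (x₁ ^ 2 + x₂ ^ 2) / t) := by
    intro m
    simpa using h.bd m 0 0
  have mono : ∀ {C c C' c' : ℝ} (_ : 0 < C) (_ : C ≤ C') (_ : c' ≤ c) (p x₁ x₂ t : ℝ), 0 < t →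
      C * t ^ p * Real.exp (-c * (x₁ ^ 2 + x₂ ^ 2) / t)
        ≤ C' * t ^ p * Real.exp (-c' * (x₁ ^ 2 + x₂ ^ 2) / t) := by
    intro C c C' c' hC hCC hcc p x₁ x₂ t ht
    have : 0 ≤ t ^ p := Real.rpow_nonneg ht.le _
    have hC' : 0 < C' := by linarith
    gcongr
  induction n with
  | zero =>
    obtain ⟨C, hC, c, hc, H⟩ := h1 0
    refine ⟨C, hC, c, hc, fun m hm => ?_⟩
    obtain rfl : m = 0 := by omega
    exact H
  | succ n ih =>
    obtain ⟨C, hC, c, hc, H⟩ := ih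
    obtain ⟨C', hC', c', hc', H'⟩ := h1 (n + 1)
    refine ⟨C + C', by positivity, min c c', lt_min hc hc', fun m hm x₁ x₂ t ht => ?_⟩
    rcases Nat.lt_or_ge m (n + 1) with hlt | hge
    · exact (H m (by omega) x₁ x₂ t ht).trans
        (mono hC (by linarith) (min_le_left _ _) _ _ _ _ ht)
    · obtain rfl : m = n + 1 := by omega
      exact (H' x₁ x₂ t ht).trans (mono hC' (by linarith) (min_le_right _ _) _ _ _ _ ht)

theorem sum3_pow {a b c : ℝ} (ha : 0 ≤ a) (hb : 0 ≤ b) (hc : 0 ≤ c) (m : ℕ) :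
    (a + b + c) ^ m ≤ 3 ^ m * (a ^ m + b ^ m + c ^ m) := by
  have h : ∃ d, 0 ≤ d ∧ a ≤ d ∧ b ≤ d ∧ c ≤ d ∧ d ^ m ≤ a ^ m + b ^ m + c ^ m := by
    have := pow_nonneg ha m; have := pow_nonneg hb m; have := pow_nonneg hc m
    rcases le_total a b with h1 | h1
    · rcases le_total b c with h2 | h2
      · exact ⟨c, hc, h1.trans h2, h2, le_rfl, by linarith⟩
      · exact ⟨b, hb, h1, le_rfl, h2, by linarith⟩
    · rcases le_total a c with h2 | h2
      · exact ⟨c, hc, h2, h1.trans h2, le_rfl, by linarith⟩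
      · exact ⟨a, ha, le_rfl, h1, h2, by linarith⟩
  obtain ⟨d, hd, h1, h2, h3, h4⟩ := h
  calc (a + b + c) ^ m ≤ (3 * d) ^ m := by gcongr; linarith
    _ = 3 ^ m * d ^ m := mul_pow _ _ _
    _ ≤ _ := by gcongr

theorem Good.final {r N} (h : Good r N) (n : ℕ) : ∃ C > (0 : ℝ), ∃ c > (0 : ℝ),
    ∀ (i : Fin 2) (x₁ : ℝ), ∀ x₂ > (0 : ℝ), ∀ y₂ > (0 : ℝ), ∀ t > (0 : ℝ),
      |Jint (D1₃^[n] N) i x₁ x₂ y₂ t| ≤ C * t ^ ((r + 1) / 2)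
        * (x₁ ^ 2 + (x₂ + y₂) ^ 2 + t) ^ (-(((n : ℝ) + 1) / 2)) * Real.exp (-c * x₂ ^ 2 / t) := by
  obtain ⟨C, hC, c, hc, H⟩ := h.bd_unif (n + 1)
  obtain ⟨K, hK, HK⟩ := oneD_scaled n hc
  set b := (1 + (2 / c) ^ (n + 1) * (n + 1).factorial) with hb
  have hb0 : 0 < b := by positivity
  refine ⟨3 ^ (n + 1) * (1 + b) * K * C, by positivity, c / 2, by positivity, ?_⟩
  intro i x₁ x₂ hx₂ y₂ hy₂ t ht
  set τ := √t with hτd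
  have hτ : 0 < τ := Real.sqrt_pos.2 ht
  have hτ2 : τ ^ 2 = t := Real.sq_sqrt ht.le
  have hφ : ContDiff ℝ (⊤ : ℕ∞) fun u => N u x₂ t := by
    rw [contDiff_iff_contDiffAt]
    intro u
    have h1 : ContDiffAt ℝ (⊤ : ℕ∞) (unc N) (u, x₂, t) :=
      h.sm.contDiffAt (HT_open.mem_nhds ht)
    exact h1.comp u (f := fun u : ℝ => ((u, x₂, t) : ℝ × ℝ × ℝ))
      (by fun_prop)
  set e := Real.exp (-c * x₂ ^ 2 / t) with he
  set J := Jint (D1₃^[n] N) i x₁ x₂ y₂ t with hJ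
  have hτm : ∀ m : ℕ, τ ^ m = t ^ ((m : ℝ) / 2) := by
    intro m
    rw [hτd, Real.sqrt_eq_rpow, ← Real.rpow_natCast, ← Real.rpow_mul ht.le]
    congr 1; ring
  have main : (τ ^ (n + 1) + √(x₁ ^ 2 + y₂ ^ 2) ^ (n + 1)) * |J|
      ≤ K * (C * t ^ (r / 2) * e) * τ := by
    have := HK (C * t ^ (r / 2) * e) τ (fun u => N u x₂ t) hτ hφ (fun m hm u => by
      rw [← D1_iter]
      calc τ ^ m * |(D1₃^[m] N) u x₂ t| ≤ τ ^ m * (C * t ^ ((r - (m : ℝ)) / 2)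
              * Real.exp (-c * (u ^ 2 + x₂ ^ 2) / t)) := by gcongr; exact H m hm u x₂ t ht
        _ = C * (t ^ ((m : ℝ) / 2) * t ^ ((r - (m : ℝ)) / 2))
              * Real.exp (-c * (u ^ 2 + x₂ ^ 2) / t) := by rw [hτm]; ring
        _ = C * t ^ (r / 2) * (e * Real.exp (-c * (u / τ) ^ 2)) := by
            rw [← Real.rpow_add ht, he, ← Real.exp_add, div_pow, hτ2]
            congr 2
            · congr 1; ring
            · ring
        _ = _ := by ring
        _ ≤ _ := le_rfl) i x₁ y₂ hy₂
    simpa only [hJ, Jint, D1_iter] using this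
  set z := √(x₁ ^ 2 + y₂ ^ 2) with hz
  have hz0 : 0 ≤ z := Real.sqrt_nonneg _
  have hz2 : z ^ 2 = x₁ ^ 2 + y₂ ^ 2 := Real.sq_sqrt (by positivity)
  have hzy : y₂ ≤ z := Real.le_sqrt_of_sq_le (by nlinarith [sq_nonneg x₁])
  set W := x₁ ^ 2 + (x₂ + y₂) ^ 2 + t with hW
  have hW0 : 0 < W := by positivity
  have hWs : √W ≤ z + x₂ + τ := by
    apply Real.sqrt_le_iff.2
    refine ⟨by positivity, ?_⟩
    have : x₂ * y₂ ≤ x₂ * z := by gcongr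
    nlinarith [mul_nonneg hz0 hτ.le, mul_pos hx₂ hτ]
  have hWp : W ^ (((n : ℝ) + 1) / 2) = √W ^ (n + 1) := by
    rw [Real.sqrt_eq_rpow, ← Real.rpow_natCast, ← Real.rpow_mul hW0.le]
    congr 1; push_cast; ring
  set e2 := Real.exp (-(c / 2) * x₂ ^ 2 / t) with he2
  have hee : e ≤ e2 := by
    rw [he, he2]
    gcongr
    linarith
  set Q := K * (C * t ^ (r / 2)) * τ with hQ
  have hQ0 : 0 < Q := by
    have := Real.rpow_pos_of_pos ht (r / 2)
    positivity
  have hQe : K * (C * t ^ (r / 2) * e) * τ = Q * e := by rw [hQ]; ring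
  rw [hQe] at main
  have hx : x₂ ^ (n + 1) * |J| ≤ b * Q * e2 := by
    have h1 : τ ^ (n + 1) * |J| ≤ Q * Real.exp (-c * (x₂ / τ) ^ 2) := by
      have e' : Real.exp (-c * (x₂ / τ) ^ 2) = e := by
        rw [he, div_pow, hτ2]; congr 1; ring
      rw [e']
      refine le_trans ?_ main
      gcongr
      nlinarith [pow_nonneg hz0 (n + 1)]
    have h2 := pow_mul_gauss (n + 1) hc (x₂ / τ) (a := τ ^ (n + 1) * |J|)
      (by rw [abs_of_nonneg (by positivity)]; exact h1)
    rw [abs_of_nonneg (by positivity), div_pow, ← mul_assoc,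
      div_mul_cancel₀ _ (by positivity), ← hb] at h2
    refine h2.trans (le_of_eq ?_)
    rw [he2, div_pow, hτ2]
    congr 2; ring
  have tot : W ^ (((n : ℝ) + 1) / 2) * |J| ≤ 3 ^ (n + 1) * (1 + b) * Q * e2 := by
    rw [hWp]
    calc √W ^ (n + 1) * |J| ≤ (z + x₂ + τ) ^ (n + 1) * |J| := by gcongr
      _ ≤ (3 ^ (n + 1) * (z ^ (n + 1) + x₂ ^ (n + 1) + τ ^ (n + 1))) * |J| := by
          gcongr; exact sum3_pow hz0 hx₂.le hτ.le _
      _ = 3 ^ (n + 1) * ((τ ^ (n + 1) + z ^ (n + 1)) * |J| + x₂ ^ (n + 1) * |J|) := by ring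
      _ ≤ 3 ^ (n + 1) * (Q * e2 + b * Q * e2) := by
          refine mul_le_mul_of_nonneg_left (add_le_add (main.trans ?_) hx) (by positivity)
          gcongr
      _ = _ := by ring
  have ht1 : t ^ ((r + 1) / 2) = t ^ (r / 2) * τ := by
    rw [hτd, Real.sqrt_eq_rpow, ← Real.rpow_add ht]
    congr 1; ring
  have hWpos : 0 < W ^ (((n : ℝ) + 1) / 2) := Real.rpow_pos_of_pos hW0 _
  rw [Real.rpow_neg hW0.le, ht1]
  rw [mul_comm, ← le_div_iff₀ hWpos] at tot
  refine tot.trans (le_of_eq ?_)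
  rw [hQ]
  ring

/-- Pointwise derivative bounds for the half-space kernel
`J_i(x,y₂,t) = ∫_ℝ ∂_iE(y₁,y₂) M(x₁−y₁,x₂,t) dy₁` when `M` is smooth, parabolically
homogeneous of degree `q`, and has Gaussian derivative bounds (Solonnikov-type scaling
lemma, two-dimensional case). -/
theorem stmt14 (q : ℝ) (M : ℝ → ℝ → ℝ → ℝ)
    (hsmooth : ContDiffOn ℝ (⊤ : ℕ∞) (fun p : ℝ × ℝ × ℝ => M p.1 p.2.1 p.2.2)
      {p : ℝ × ℝ × ℝ | 0 < p.2.2})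
    (hhom : ∀ lam > (0 : ℝ), ∀ (x₁ x₂ : ℝ), ∀ t > (0 : ℝ),
      M (lam * x₁) (lam * x₂) (lam ^ 2 * t) = lam ^ q * M x₁ x₂ t)
    (hbound : ∀ k₁ k₂ s : ℕ, ∃ C > (0 : ℝ), ∃ c > (0 : ℝ), ∀ (x₁ x₂ : ℝ), ∀ t > (0 : ℝ),
      |(D1₃^[k₁] (D2₃^[k₂] (D3₃^[s] M))) x₁ x₂ t|
        ≤ C * t ^ ((q - (k₁ : ℝ) - (k₂ : ℝ) - 2 * (s : ℝ)) / 2)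
            * Real.exp (-c * (x₁ ^ 2 + x₂ ^ 2) / t))
    (i : Fin 2) :
    ∀ k₁ k₂ l s : ℕ, ∃ C > (0 : ℝ), ∃ c > (0 : ℝ),
      ∀ x₁ : ℝ, ∀ x₂ > (0 : ℝ), ∀ y₂ > (0 : ℝ), ∀ t > (0 : ℝ),
        |(D1₄^[k₁] (D2₄^[k₂] (D3₄^[l] (D4₄^[s] (Jint M i))))) x₁ x₂ y₂ t|
          ≤ C * t ^ ((q + 1 - 2 * (s : ℝ) - (k₂ : ℝ)) / 2)
              * (x₁ ^ 2 + (x₂ + y₂) ^ 2 + t) ^ (-(((k₁ : ℝ) + (l : ℝ) + 1) / 2))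
              * Real.exp (-c * x₂ ^ 2 / t) := by
  intro k₁ k₂ l s
  have hM : Good q M := ⟨hsmooth, hbound⟩
  have hN := (hM.iter3 s).iter2 k₂
  obtain ⟨C, hC, c, hc, H⟩ := hN.final (k₁ + l)
  obtain ⟨j, ε, hε, hR⟩ := PotRep.main hM i k₁ k₂ l s
  refine ⟨C, hC, c, hc, fun x₁ x₂ hx₂ y₂ hy₂ t ht => ?_⟩
  rw [hR x₁ x₂ y₂ t hy₂ ht, abs_mul, hε, one_mul]
  have := H j x₁ x₂ hx₂ y₂ hy₂ t ht
  push_cast at this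
  convert this using 5
  ring
end

section
/- Let E(z) = (1/(2π)) log|z| and, for x, y in the open upper half-plane ℝ²₊, let N(x,y) = E(x−y) + E(x−y*) with y* = (y₁,−y₂). Let F = (F₁,F₂) : ℝ²₊ → ℝ² be smooth with compact support contained in ℝ²₊, and define the Helmholtz projection ℚF(x) = F(x) + ∇_x ∫_{ℝ²₊} ∇_y N(x,y) · F(y) dy for x ∈ ℝ²₊. Then ℚF is divergence-free on ℝ²₊: ∇·(ℚF)(x) = 0 for all x ∈ ℝ²₊; moreover its second component extends continuously to the boundary with (ℚF)₂(x₁, 0) = 0 for all x₁ ∈ ℝ. -/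
open MeasureTheory

/-- The fundamental solution of the Laplacian on `ℝ²`: `E(z) = (1/2π) log|z|`. -/
noncomputable def Efun (p : ℝ × ℝ) : ℝ :=
  Real.log (Real.sqrt (p.1 ^ 2 + p.2 ^ 2)) / (2 * Real.pi)

/-- The Green function of the Neumann problem for the Laplacian in the upper
half-plane: `N(x,y) = E(x−y) + E(x−y*)`, `y* = (y₁,−y₂)`. -/
noncomputable def Nfun (x y : ℝ × ℝ) : ℝ :=
  Efun (x.1 - y.1, x.2 - y.2) + Efun (x.1 - y.1, x.2 + y.2)

/-- The scalar potential `x ↦ ∫_{ℝ²₊} ∇_y N(x,y)·F(y) dy`. -/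
noncomputable def pot (F : ℝ × ℝ → ℝ × ℝ) (x : ℝ × ℝ) : ℝ :=
  ∫ y in {p : ℝ × ℝ | 0 < p.2},
    (deriv (fun a => Nfun x (a, y.2)) y.1) * (F y).1
      + (deriv (fun b => Nfun x (y.1, b)) y.2) * (F y).2

/-- First component of the Helmholtz projection `ℚF = F + ∇ ∫ ∇_y N(·,y)·F(y) dy`. -/
noncomputable def QF1 (F : ℝ × ℝ → ℝ × ℝ) (x : ℝ × ℝ) : ℝ :=
  (F x).1 + deriv (fun a => pot F (a, x.2)) x.1

/-- Second component of the Helmholtz projection. -/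
noncomputable def QF2 (F : ℝ × ℝ → ℝ × ℝ) (x : ℝ × ℝ) : ℝ :=
  (F x).2 + deriv (fun b => pot F (x.1, b)) x.2

open Set

noncomputable def K1 (z : ℝ × ℝ) : ℝ := z.1 / (2 * Real.pi * (z.1 ^ 2 + z.2 ^ 2))
noncomputable def K2 (z : ℝ × ℝ) : ℝ := z.2 / (2 * Real.pi * (z.1 ^ 2 + z.2 ^ 2))

lemma K_aux (a b m : ℝ) (hm : 0 ≤ m) (ha : |a| ≤ m) (hb : m ^ 2 ≤ b) : |a / (2 * Real.pi * b)| ≤ m⁻¹ := by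
  rcases hm.eq_or_lt with rfl | hm
  · have : a = 0 := by simpa using ha
    simp [this]
  have hb0 : 0 < b := lt_of_lt_of_le (by positivity) hb
  have hpi := Real.pi_gt_three
  rw [abs_div, abs_of_pos (by positivity : 0 < 2 * Real.pi * b), div_le_iff₀ (by positivity),
    inv_mul_eq_div, le_div_iff₀ hm]
  nlinarith [abs_nonneg a]

lemma norm_sq_le (z : ℝ × ℝ) : ‖z‖ ^ 2 ≤ z.1 ^ 2 + z.2 ^ 2 := by
  rw [Prod.norm_def]
  rcases max_choice ‖z.1‖ ‖z.2‖ with h | h <;> rw [h] <;> simp <;> positivity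

lemma K1_loc : LocallyIntegrable K1 volume := by
  refine locallyIntegrable_of_norm_le_rpow (C := 1) (α := 1) (by simp) (by simp) ?_ ?_
  · refine Filter.Eventually.of_forall fun z => ?_
    rw [Real.rpow_neg_one, one_mul]
    exact K_aux z.1 _ ‖z‖ (norm_nonneg _) (norm_fst_le z) (norm_sq_le z)
  · refine Measurable.aestronglyMeasurable ?_
    unfold K1; fun_prop

lemma K2_loc : LocallyIntegrable K2 volume := by
  refine locallyIntegrable_of_norm_le_rpow (C := 1) (α := 1) (by simp) (by simp) ?_ ?_
  · refine Filter.Eventually.of_forall fun z => ?_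
    rw [Real.rpow_neg_one, one_mul]
    exact K_aux z.2 _ ‖z‖ (norm_nonneg _) (norm_snd_le z) (norm_sq_le z)
  · refine Measurable.aestronglyMeasurable ?_
    unfold K2; fun_prop

lemma exists_R {ψ : ℝ × ℝ → ℝ} (h : HasCompactSupport ψ) :
    ∃ R : ℝ, 0 < R ∧ ∀ r θ : ℝ, R < |r| → (r * Real.cos θ, r * Real.sin θ) ∉ tsupport ψ := by
  obtain ⟨R, hR, h1⟩ := h.isCompact.isBounded.exists_pos_norm_le
  refine ⟨2 * R, by positivity, fun r θ hr hmem => ?_⟩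
  have h2 := h1 _ hmem
  have ha := (norm_fst_le _).trans h2
  have hb := (norm_snd_le _).trans h2
  simp only [Real.norm_eq_abs] at ha hb
  have ha := sq_le_sq' (abs_le.1 ha).1 (abs_le.1 ha).2
  have hb := sq_le_sq' (abs_le.1 hb).1 (abs_le.1 hb).2
  have : r ^ 2 ≤ 2 * R ^ 2 := by
    calc r ^ 2 = (r * Real.cos θ) ^ 2 + (r * Real.sin θ) ^ 2 := by
          linear_combination (-r ^ 2) * Real.sin_sq_add_cos_sq θ
      _ ≤ _ := by linarith
  nlinarith [sq_abs r]

lemma polar_integrable {g : ℝ × ℝ → ℝ} (hg : Continuous g) {R : ℝ}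
    (h : ∀ p : ℝ × ℝ, R < p.1 → g p = 0) :
    IntegrableOn g (Ioi 0 ×ˢ Ioo (-Real.pi) Real.pi) (volume.prod volume) := by
  have h1 : IntegrableOn g (Icc 0 R ×ˢ Icc (-Real.pi) Real.pi) (volume.prod volume) :=
    hg.continuousOn.integrableOn_compact (isCompact_Icc.prod isCompact_Icc)
  refine IntegrableOn.of_forall_sdiff_eq_zero h1 (measurableSet_Ioi.prod measurableSet_Ioo) ?_
  rintro ⟨r, t⟩ ⟨⟨h2, h3⟩, h4⟩
  apply h
  by_contra h5
  simp only [not_lt] at h5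
  exact h4 ⟨⟨le_of_lt h2, h5⟩, ⟨h3.1.le, h3.2.le⟩⟩

lemma pd_eq {ψ : ℝ × ℝ → ℝ} (z : ℝ × ℝ) (a b : ℝ) :
    fderiv ℝ ψ z (a, b) = a * fderiv ℝ ψ z (1, 0) + b * fderiv ℝ ψ z (0, 1) := by
  have : (a, b) = a • ((1 : ℝ), (0 : ℝ)) + b • ((0 : ℝ), (1 : ℝ)) := by simp
  rw [this, map_add, map_smul, map_smul]; simp

lemma radial {ψ : ℝ × ℝ → ℝ} (hψ : ContDiff ℝ 1 ψ) (hc : HasCompactSupport ψ) :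
    ∫ z, (K1 z * fderiv ℝ ψ z (1, 0) + K2 z * fderiv ℝ ψ z (0, 1)) = - ψ 0 := by
  obtain ⟨R, hR, hR2⟩ := exists_R hc
  have hcf := hψ.continuous_fderiv one_ne_zero
  set g : ℝ × ℝ → ℝ := fun p => (2 * Real.pi)⁻¹ * fderiv ℝ ψ (p.1 * Real.cos p.2, p.1 * Real.sin p.2)
    (Real.cos p.2, Real.sin p.2) with hg
  rw [← integral_comp_polarCoord_symm]
  have e1 : ∫ p in polarCoord.target, p.1 • (K1 (polarCoord.symm p) * fderiv ℝ ψ (polarCoord.symm p) (1, 0) + K2 (polarCoord.symm p) * fderiv ℝ ψ (polarCoord.symm p) (0, 1)) = ∫ p in polarCoord.target, g p := by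
    refine setIntegral_congr_fun polarCoord.open_target.measurableSet ?_
    rintro ⟨r, t⟩ hp
    have hr : r ≠ 0 := ne_of_gt hp.1
    have : (r * Real.cos t) ^ 2 + (r * Real.sin t) ^ 2 = r ^ 2 := by
      linear_combination (r ^ 2) * Real.sin_sq_add_cos_sq t
    have hpi := Real.pi_ne_zero
    simp only [hg, pd_eq (ψ := ψ) _ (Real.cos t), polarCoord_symm_apply, K1, K2, this, smul_eq_mul]
    field_simp
  rw [e1, polarCoord_target]
  have hgi : IntegrableOn g (Ioi 0 ×ˢ Ioo (-Real.pi) Real.pi) (volume.prod volume) := by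
    refine polar_integrable (R := R) ?_ ?_
    · exact continuous_const.mul ((hcf.comp (by fun_prop)).clm_apply (by fun_prop))
    · rintro ⟨r, t⟩ h
      have := image_eq_zero_of_notMem_tsupport fun h' => hR2 r t (lt_of_lt_of_le h (le_abs_self r)) (tsupport_fderiv_subset ℝ h')
      simp [hg, this]
  rw [Measure.volume_eq_prod, ← Measure.prod_restrict, integral_prod_symm]
  swap
  · rw [Measure.prod_restrict]; exact hgi
  have : ∀ t : ℝ, ∫ r in Ioi 0, g (r, t) = (2 * Real.pi)⁻¹ * (- ψ 0) := by
    intro t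
    have hd : ContDiff ℝ 1 fun r : ℝ => ψ (r * Real.cos t, r * Real.sin t) := by fun_prop
    have hs : HasCompactSupport fun r : ℝ => ψ (r * Real.cos t, r * Real.sin t) := by
      refine HasCompactSupport.intro (isCompact_Icc (a := -R) (b := R)) fun r hr => ?_
      refine image_eq_zero_of_notMem_tsupport (hR2 r t ?_)
      by_contra h
      exact hr (abs_le.1 (not_lt.1 h))
    have := hs.integral_Ioi_deriv_eq hd 0
    simp only [hg]
    rw [integral_const_mul]
    simp only [zero_mul] at this
    rw [Prod.zero_eq_mk, ← this]
    congr 2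
    ext r
    have h1 : HasDerivAt (fun r : ℝ => (r * Real.cos t, r * Real.sin t)) (Real.cos t, Real.sin t) r := by
      simpa using ((hasDerivAt_id r).mul_const (Real.cos t)).prodMk ((hasDerivAt_id r).mul_const (Real.sin t))
    exact (((hψ.differentiable one_ne_zero _).hasFDerivAt).comp_hasDerivAt r h1).deriv.symm
  simp only [this]
  have hpi := Real.pi_pos
  simp [hpi.le]
  field_simp
  ring

lemma tangential {ψ : ℝ × ℝ → ℝ} (hψ : ContDiff ℝ 1 ψ) (hc : HasCompactSupport ψ) :
    ∫ z, (K1 z * fderiv ℝ ψ z (0, 1) - K2 z * fderiv ℝ ψ z (1, 0)) = 0 := by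
  obtain ⟨R, hR, hR2⟩ := exists_R hc
  have hcf := hψ.continuous_fderiv one_ne_zero
  set g : ℝ × ℝ → ℝ := fun p => (2 * Real.pi)⁻¹ * fderiv ℝ ψ (p.1 * Real.cos p.2, p.1 * Real.sin p.2)
    (-Real.sin p.2, Real.cos p.2) with hg
  rw [← integral_comp_polarCoord_symm]
  have e1 : ∫ p in polarCoord.target, p.1 • (K1 (polarCoord.symm p) * fderiv ℝ ψ (polarCoord.symm p) (0, 1) - K2 (polarCoord.symm p) * fderiv ℝ ψ (polarCoord.symm p) (1, 0)) = ∫ p in polarCoord.target, g p := by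
    refine setIntegral_congr_fun polarCoord.open_target.measurableSet ?_
    rintro ⟨r, t⟩ hp
    have hr : r ≠ 0 := ne_of_gt hp.1
    have : (r * Real.cos t) ^ 2 + (r * Real.sin t) ^ 2 = r ^ 2 := by
      linear_combination (r ^ 2) * Real.sin_sq_add_cos_sq t
    have hpi := Real.pi_ne_zero
    simp only [hg, pd_eq (ψ := ψ) _ (-Real.sin t), polarCoord_symm_apply, K1, K2, this, smul_eq_mul]
    field_simp
    ring
  rw [e1, polarCoord_target]
  have hgi : IntegrableOn g (Ioi 0 ×ˢ Ioo (-Real.pi) Real.pi) (volume.prod volume) := by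
    refine polar_integrable (R := R) ?_ ?_
    · exact continuous_const.mul ((hcf.comp (by fun_prop)).clm_apply (by fun_prop))
    · rintro ⟨r, t⟩ h
      have := image_eq_zero_of_notMem_tsupport fun h' => hR2 r t (lt_of_lt_of_le h (le_abs_self r)) (tsupport_fderiv_subset ℝ h')
      simp [hg, this]
  rw [Measure.volume_eq_prod, setIntegral_prod _ hgi]
  refine setIntegral_eq_zero_of_forall_eq_zero fun r hr => ?_
  have hr : r ≠ 0 := ne_of_gt hr
  simp only [hg]
  rw [integral_const_mul]
  refine mul_eq_zero_of_right _ ?_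
  rw [← integral_Ioc_eq_integral_Ioo, ← intervalIntegral.integral_of_le (by linarith [Real.pi_pos])]
  have hderiv : ∀ t ∈ uIcc (-Real.pi) Real.pi, HasDerivAt (fun t : ℝ => r⁻¹ * ψ (r * Real.cos t, r * Real.sin t)) (fderiv ℝ ψ (r * Real.cos t, r * Real.sin t) (-Real.sin t, Real.cos t)) t := by
    intro t _
    have h1 : HasDerivAt (fun t : ℝ => (r * Real.cos t, r * Real.sin t)) (r * -Real.sin t, r * Real.cos t) t := 
      ((Real.hasDerivAt_cos t).const_mul r).prodMk ((Real.hasDerivAt_sin t).const_mul r)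
    have h2 := (((hψ.differentiable one_ne_zero _).hasFDerivAt).comp_hasDerivAt t h1).const_mul r⁻¹
    have h3 : (r * -Real.sin t, r * Real.cos t) = r • (-Real.sin t, Real.cos t) := by simp
    rw [h3, map_smul, smul_eq_mul, inv_mul_cancel_left₀ hr] at h2
    exact h2
  rw [intervalIntegral.integral_eq_sub_of_hasDerivAt hderiv]
  · simp
  · apply Continuous.intervalIntegrable
    exact (hcf.comp (by fun_prop)).clm_apply (by fun_prop)

noncomputable def pd (v : ℝ × ℝ) (φ : ℝ × ℝ → ℝ) : ℝ × ℝ → ℝ := fun x => fderiv ℝ φ x v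

noncomputable def TT (K φ : ℝ × ℝ → ℝ) : ℝ × ℝ → ℝ :=
  convolution K φ (ContinuousLinearMap.mul ℝ ℝ) volume

def CS (φ : ℝ × ℝ → ℝ) : Prop := ContDiff ℝ (⊤ : ℕ∞) φ ∧ HasCompactSupport φ

lemma CS.c1 {φ : ℝ × ℝ → ℝ} (h : CS φ) : ContDiff ℝ 1 φ := h.1.of_le (by exact_mod_cast le_top)

lemma CS.pd {φ : ℝ × ℝ → ℝ} (h : CS φ) (v : ℝ × ℝ) : CS (pd v φ) := by
  refine ⟨?_, ?_⟩
  · exact (h.1.fderiv_right (m := (⊤ : ℕ∞)) (by exact_mod_cast le_top)).clm_apply contDiff_const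
  · exact h.2.fderiv_apply ℝ v

lemma CS.add {φ ψ : ℝ × ℝ → ℝ} (h : CS φ) (h' : CS ψ) : CS (φ + ψ) :=
  ⟨h.1.add h'.1, h.2.add h'.2⟩

lemma CS.neg {φ : ℝ × ℝ → ℝ} (h : CS φ) : CS (-φ) :=
  ⟨h.1.neg, h.2.neg⟩

lemma TT_apply (K φ : ℝ × ℝ → ℝ) (x : ℝ × ℝ) : TT K φ x = ∫ z, K z * φ (x - z) := rfl

lemma TT_apply' (K φ : ℝ × ℝ → ℝ) (x : ℝ × ℝ) : TT K φ x = ∫ y, K (x - y) * φ y := by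
  rw [TT_apply, ← integral_sub_left_eq_self _ volume x]
  simp

lemma TT_int {K φ : ℝ × ℝ → ℝ} (hK : LocallyIntegrable K volume) (h : CS φ) (x : ℝ × ℝ) :
    Integrable (fun z => K z * φ (x - z)) volume :=
  h.2.convolutionExists_right (ContinuousLinearMap.mul ℝ ℝ) hK h.1.continuous x

lemma TT_int' {K φ : ℝ × ℝ → ℝ} (hK : LocallyIntegrable K volume) (h : CS φ) (x : ℝ × ℝ) :
    Integrable (fun y => K (x - y) * φ y) volume := by
  simpa using (TT_int hK h x).comp_sub_left x

lemma TT_cont {K φ : ℝ × ℝ → ℝ} (hK : LocallyIntegrable K volume) (h : CS φ) :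
    Continuous (TT K φ) :=
  h.2.continuous_convolution_right (ContinuousLinearMap.mul ℝ ℝ) hK h.1.continuous

lemma TT_fderiv {K φ : ℝ × ℝ → ℝ} (hK : LocallyIntegrable K volume) (h : CS φ) (x : ℝ × ℝ) :
    ∃ L : ℝ × ℝ →L[ℝ] ℝ, HasFDerivAt (TT K φ) L x ∧ ∀ v, L v = TT K (pd v φ) x := by
  refine ⟨_, h.2.hasFDerivAt_convolution_right (ContinuousLinearMap.mul ℝ ℝ) hK h.c1 x, fun v => ?_⟩
  exact convolution_precompR_apply (ContinuousLinearMap.mul ℝ ℝ) hK (h.2.fderiv ℝ)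
    (h.c1.continuous_fderiv one_ne_zero) x v

lemma line1 (a b : ℝ) : HasDerivAt (fun a : ℝ => (a, b)) ((1 : ℝ), (0 : ℝ)) a :=
  (hasDerivAt_id a).prodMk (hasDerivAt_const a b)

lemma line2 (a b : ℝ) : HasDerivAt (fun b : ℝ => (a, b)) ((0 : ℝ), (1 : ℝ)) b :=
  (hasDerivAt_const b a).prodMk (hasDerivAt_id b)

lemma TT_d1 {K φ : ℝ × ℝ → ℝ} (hK : LocallyIntegrable K volume) (h : CS φ) (a b : ℝ) :
    HasDerivAt (fun a => TT K φ (a, b)) (TT K (pd (1, 0) φ) (a, b)) a := by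
  obtain ⟨L, h1, h2⟩ := TT_fderiv hK h (a, b)
  rw [← h2]
  exact h1.comp_hasDerivAt a (line1 a b)

lemma TT_d2 {K φ : ℝ × ℝ → ℝ} (hK : LocallyIntegrable K volume) (h : CS φ) (a b : ℝ) :
    HasDerivAt (fun b => TT K φ (a, b)) (TT K (pd (0, 1) φ) (a, b)) b := by
  obtain ⟨L, h1, h2⟩ := TT_fderiv hK h (a, b)
  rw [← h2]
  exact h1.comp_hasDerivAt b (line2 a b)

lemma CS_d1 {φ : ℝ × ℝ → ℝ} (h : CS φ) (a b : ℝ) :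
    HasDerivAt (fun a => φ (a, b)) (pd (1, 0) φ (a, b)) a :=
  (h.c1.differentiable one_ne_zero _).hasFDerivAt.comp_hasDerivAt a (line1 a b)

lemma CS_d2 {φ : ℝ × ℝ → ℝ} (h : CS φ) (a b : ℝ) :
    HasDerivAt (fun b => φ (a, b)) (pd (0, 1) φ (a, b)) b :=
  (h.c1.differentiable one_ne_zero _).hasFDerivAt.comp_hasDerivAt b (line2 a b)

lemma CS.refl {φ : ℝ × ℝ → ℝ} (h : CS φ) (x : ℝ × ℝ) : CS (fun z => φ (x - z)) := by
  refine ⟨h.1.comp (by fun_prop), ?_⟩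
  exact h.2.comp_homeomorph (Homeomorph.subLeft x)

lemma fderiv_refl {φ : ℝ × ℝ → ℝ} (h : CS φ) (x z v : ℝ × ℝ) :
    fderiv ℝ (fun z => φ (x - z)) z v = - pd v φ (x - z) := by
  have h1 := ((h.c1.differentiable one_ne_zero (x - z)).hasFDerivAt).comp z
    ((hasFDerivAt_id z).const_sub x)
  have h2 : fderiv ℝ (fun z => φ (x - z)) z = _ := h1.fderiv
  rw [h2]
  simp [pd]

lemma TT_div {φ : ℝ × ℝ → ℝ} (h : CS φ) (x : ℝ × ℝ) :
    TT K1 (pd (1, 0) φ) x + TT K2 (pd (0, 1) φ) x = φ x := by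
  have h1 := radial (h.refl x).c1 (h.refl x).2
  simp only [fderiv_refl h, sub_zero] at h1
  rw [TT_apply, TT_apply, ← integral_add (TT_int K1_loc (h.pd _) x) (TT_int K2_loc (h.pd _) x),
    ← neg_neg (φ x), ← h1, ← integral_neg]
  congr 1; ext z; ring

lemma TT_curl {φ : ℝ × ℝ → ℝ} (h : CS φ) (x : ℝ × ℝ) :
    TT K1 (pd (0, 1) φ) x = TT K2 (pd (1, 0) φ) x := by
  have h1 := tangential (h.refl x).c1 (h.refl x).2
  simp only [fderiv_refl h] at h1
  rw [← sub_eq_zero, TT_apply, TT_apply,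
    ← integral_sub (TT_int K1_loc (h.pd _) x) (TT_int K2_loc (h.pd _) x),
    ← neg_eq_zero, ← integral_neg]
  refine Eq.trans ?_ h1
  congr 1; ext z; ring

lemma pd_comm {φ : ℝ × ℝ → ℝ} (h : CS φ) (v w : ℝ × ℝ) : pd v (pd w φ) = pd w (pd v φ) := by
  ext x
  have hs : IsSymmSndFDerivAt ℝ φ x :=
    h.1.contDiffAt.isSymmSndFDerivAt (by simp; exact WithTop.coe_le_coe.2 le_top)
  have hd : DifferentiableAt ℝ (fderiv ℝ φ) x :=
    (h.1.fderiv_right (m := 1) (WithTop.coe_le_coe.2 (le_top : (1 + 1 : ℕ∞) ≤ ⊤))).differentiable one_ne_zero x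
  have key : ∀ v w, pd v (pd w φ) x = fderiv ℝ (fderiv ℝ φ) x v w := by
    intro v w
    have : HasFDerivAt (pd w φ) _ x := hd.hasFDerivAt.clm_apply (hasFDerivAt_const w x)
    unfold pd at this ⊢
    rw [this.fderiv]
    simp
  rw [key, key]
  exact hs v w

lemma lap {H1 H2 : ℝ × ℝ → ℝ} (h1 : CS H1) (h2 : CS H2) (x : ℝ × ℝ) :
    (TT K1 (pd (1, 0) (pd (1, 0) H1)) x + TT K2 (pd (1, 0) (pd (1, 0) H2)) x)
    + (TT K1 (pd (0, 1) (pd (0, 1) H1)) x + TT K2 (pd (0, 1) (pd (0, 1) H2)) x)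
    = pd (1, 0) H1 x + pd (0, 1) H2 x := by
  rw [TT_curl (h1.pd _), pd_comm h1 (1, 0) (0, 1), ← TT_curl (h2.pd (1, 0)), pd_comm h2 (0, 1) (1, 0)]
  rw [← TT_div (h1.pd _), ← TT_div (h2.pd (0, 1))]
  ring

lemma E_d1 (p q : ℝ) (h : p ^ 2 + q ^ 2 ≠ 0) : HasDerivAt (fun a => Efun (a, q)) (K1 (p, q)) p := by
  have h1 : HasDerivAt (fun a : ℝ => Real.log (a ^ 2 + q ^ 2) / 2 / (2 * Real.pi)) (K1 (p, q)) p := by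
    have := (((((hasDerivAt_id p).pow 2).add_const (q ^ 2)).log h).div_const 2).div_const (2 * Real.pi)
    refine this.congr_deriv ?_
    have hpi := Real.pi_ne_zero
    simp only [K1, id]
    field_simp
    simp
    field_simp
  convert h1 using 1
  ext a
  simp only [Efun]
  rw [Real.log_sqrt (by positivity)]

lemma Efun_symm (p q : ℝ) : Efun (p, q) = Efun (q, p) := by
  simp only [Efun]; rw [add_comm]

lemma E_d2 (p q : ℝ) (h : p ^ 2 + q ^ 2 ≠ 0) : HasDerivAt (fun b => Efun (p, b)) (K2 (p, q)) q := by
  have := E_d1 q p (by rwa [add_comm])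
  simp only [Efun_symm p]
  convert this using 1
  simp only [K1, K2]; rw [add_comm]

lemma ne_sq {p q : ℝ} (h : (p, q) ≠ 0) : p ^ 2 + q ^ 2 ≠ 0 := by
  intro h1
  apply h
  have hp : p = 0 := by nlinarith [sq_nonneg p, sq_nonneg q]
  have hq : q = 0 := by nlinarith [sq_nonneg p, sq_nonneg q]
  simp [hp, hq]

/-- Reflection. -/
def st (y : ℝ × ℝ) : ℝ × ℝ := (y.1, -y.2)

lemma st_st (y : ℝ × ℝ) : st (st y) = y := by simp [st]

lemma N_d1 (x y : ℝ × ℝ) (h : x - y ≠ 0) (h' : x - st y ≠ 0) :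
    deriv (fun a => Nfun x (a, y.2)) y.1 = -K1 (x - y) - K1 (x - st y) := by
  have e1 : x - y = (x.1 - y.1, x.2 - y.2) := rfl
  have e2 : x - st y = (x.1 - y.1, x.2 + y.2) := by simp [st, Prod.ext_iff]
  rw [e1] at h ⊢
  rw [e2] at h' ⊢
  have hs : HasDerivAt (fun a : ℝ => x.1 - a) (-1) y.1 := by
    simpa using (hasDerivAt_id y.1).const_sub x.1
  have a1 := (E_d1 _ _ (ne_sq h)).comp y.1 hs
  have a2 := (E_d1 _ _ (ne_sq h')).comp y.1 hs
  have := (a1.add a2).deriv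
  calc _ = _ := this
    _ = _ := by ring

lemma N_d2 (x y : ℝ × ℝ) (h : x - y ≠ 0) (h' : x - st y ≠ 0) :
    deriv (fun b => Nfun x (y.1, b)) y.2 = -K2 (x - y) + K2 (x - st y) := by
  have e1 : x - y = (x.1 - y.1, x.2 - y.2) := rfl
  have e2 : x - st y = (x.1 - y.1, x.2 + y.2) := by simp [st, Prod.ext_iff]
  rw [e1] at h ⊢
  rw [e2] at h' ⊢
  have hs : HasDerivAt (fun a : ℝ => x.2 - a) (-1) y.2 := by
    simpa using (hasDerivAt_id y.2).const_sub x.2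
  have hs' : HasDerivAt (fun a : ℝ => x.2 + a) 1 y.2 := by
    simpa using (hasDerivAt_id y.2).const_add x.2
  have a1 := (E_d2 _ _ (ne_sq h)).comp y.2 hs
  have a2 := (E_d2 _ _ (ne_sq h')).comp y.2 hs'
  have := (a1.add a2).deriv
  calc _ = _ := this
    _ = _ := by ring

lemma st_mp : MeasurePreserving st (volume : Measure (ℝ × ℝ)) volume := by
  have := (MeasurePreserving.id (volume : Measure ℝ)).prod (Measure.measurePreserving_neg (volume : Measure ℝ))
  exact this

def stH : (ℝ × ℝ) ≃ₜ (ℝ × ℝ) where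
  toFun := st
  invFun := st
  left_inv := st_st
  right_inv := st_st
  continuous_toFun := by unfold st; fun_prop
  continuous_invFun := by unfold st; fun_prop

lemma CS.st {φ : ℝ × ℝ → ℝ} (h : CS φ) : CS (fun z => φ (st z)) := by
  refine ⟨h.1.comp (by unfold _root_.st; fun_prop), ?_⟩
  exact h.2.comp_homeomorph stH

lemma TT_int_st {K φ : ℝ × ℝ → ℝ} (hK : LocallyIntegrable K volume) (h : CS φ) (x : ℝ × ℝ) :
    Integrable (fun y => K (x - st y) * φ y) volume := by
  have := (st_mp.integrable_comp_emb stH.measurableEmbedding).2 (TT_int' hK h.st x)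
  simpa [Function.comp_def, st_st] using this

lemma TT_st (K φ : ℝ × ℝ → ℝ) (x : ℝ × ℝ) :
    TT K (fun z => φ (st z)) x = ∫ y, K (x - st y) * φ y := by
  rw [TT_apply', ← st_mp.integral_comp stH.measurableEmbedding]
  simp only [st_st]

noncomputable def HH1 (F : ℝ × ℝ → ℝ × ℝ) : ℝ × ℝ → ℝ := (fun y => (F y).1) + fun y => (F (st y)).1
noncomputable def HH2 (F : ℝ × ℝ → ℝ × ℝ) : ℝ × ℝ → ℝ := (fun y => (F y).2) + -fun y => (F (st y)).2

lemma TT_add {K φ ψ : ℝ × ℝ → ℝ} (hK : LocallyIntegrable K volume) (h : CS φ) (h' : CS ψ) (x : ℝ × ℝ) :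
    TT K (φ + ψ) x = TT K φ x + TT K ψ x := by
  simp only [TT_apply]
  rw [← integral_add (TT_int hK h x) (TT_int hK h' x)]
  congr 1; ext z; simp [mul_add]

lemma TT_neg (K φ : ℝ × ℝ → ℝ) (x : ℝ × ℝ) :
    TT K (-φ) x = - TT K φ x := by
  simp only [TT_apply]
  rw [← integral_neg]
  congr 1; ext z; simp

lemma F1_cs {F : ℝ × ℝ → ℝ × ℝ} (hF : ContDiff ℝ (⊤ : ℕ∞) F) (hcpt : HasCompactSupport F) :
    CS (fun y => (F y).1) := ⟨hF.fst, hcpt.comp_left (g := Prod.fst) rfl⟩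

lemma F2_cs {F : ℝ × ℝ → ℝ × ℝ} (hF : ContDiff ℝ (⊤ : ℕ∞) F) (hcpt : HasCompactSupport F) :
    CS (fun y => (F y).2) := ⟨hF.snd, hcpt.comp_left (g := Prod.snd) rfl⟩

lemma pot_eq {F : ℝ × ℝ → ℝ × ℝ} (hF : ContDiff ℝ (⊤ : ℕ∞) F) (hcpt : HasCompactSupport F)
    (hsupp : tsupport F ⊆ {p : ℝ × ℝ | 0 < p.2}) (x : ℝ × ℝ) :
    pot F x = -(TT K1 (HH1 F) x + TT K2 (HH2 F) x) := by
  have c1 := F1_cs hF hcpt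
  have c2 := F2_cs hF hcpt
  unfold pot
  rw [setIntegral_eq_integral_of_forall_compl_eq_zero]
  swap
  · intro y hy
    have : F y = 0 := image_eq_zero_of_notMem_tsupport fun h => hy (hsupp h)
    simp [this]
  have hae : (fun y : ℝ × ℝ => (deriv (fun a => Nfun x (a, y.2)) y.1) * (F y).1
      + (deriv (fun b => Nfun x (y.1, b)) y.2) * (F y).2) =ᵐ[volume]
      fun y => -((K1 (x - y) * (F y).1 + K1 (x - st y) * (F y).1) +
        (K2 (x - y) * (F y).2 - K2 (x - st y) * (F y).2)) := by
    have a1 : ∀ᵐ y : ℝ × ℝ, y ≠ x := by simp [ae_iff]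
    have a2 : ∀ᵐ y : ℝ × ℝ, y ≠ st x := by simp [ae_iff]
    filter_upwards [a1, a2] with y h1 h2
    have h3 : x - y ≠ 0 := sub_ne_zero.2 h1.symm
    have h4 : x - st y ≠ 0 := by
      rw [sub_ne_zero]; rintro rfl; exact h2 (st_st y).symm
    rw [N_d1 x y h3 h4, N_d2 x y h3 h4]
    ring
  rw [integral_congr_ae hae, integral_neg, integral_add, integral_add, integral_sub,
    HH1, HH2, TT_add K1_loc c1 c1.st, TT_add K2_loc c2 c2.st.neg, TT_neg,
    TT_st K1 (fun y => (F y).1), TT_st K2 (fun y => (F y).2), TT_apply', TT_apply']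
  · ring
  · exact TT_int' K2_loc c2 x
  · exact TT_int_st K2_loc c2 x
  · exact TT_int' K1_loc c1 x
  · exact TT_int_st K1_loc c1 x
  · exact (TT_int' K1_loc c1 x).add (TT_int_st K1_loc c1 x)
  · exact (TT_int' K2_loc c2 x).sub (TT_int_st K2_loc c2 x)

lemma pot_even (F : ℝ × ℝ → ℝ × ℝ) (a b : ℝ) : pot F (a, -b) = pot F (a, b) := by
  have : ∀ y, Nfun (a, -b) y = Nfun (a, b) y := by
    intro y
    simp only [Nfun, Efun]
    rw [add_comm]
    have e1 : (-b + y.2) ^ 2 = (b - y.2) ^ 2 := by ring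
    have e2 : (-b - y.2) ^ 2 = (b + y.2) ^ 2 := by ring
    simp only [e1, e2]
  simp only [pot, this]

/-- For a smooth `F` with compact support in the open upper half-plane, the Helmholtz
projection `ℚF` is divergence-free in `ℝ²₊`, and its second component extends
continuously to the boundary with value `0` there. -/
theorem stmt19 (F : ℝ × ℝ → ℝ × ℝ)
    (hF : ContDiff ℝ (⊤ : ℕ∞) F)
    (hcpt : HasCompactSupport F)
    (hsupp : tsupport F ⊆ {p : ℝ × ℝ | 0 < p.2}) :
    (∀ x : ℝ × ℝ, 0 < x.2 →
      deriv (fun a => QF1 F (a, x.2)) x.1 + deriv (fun b => QF2 F (x.1, b)) x.2 = 0)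
    ∧ ContinuousOn (QF2 F) {p : ℝ × ℝ | 0 ≤ p.2}
    ∧ ∀ x₁ : ℝ, QF2 F (x₁, 0) = 0 := by
  have c1 : CS (HH1 F) := (F1_cs hF hcpt).add (F1_cs hF hcpt).st
  have c2 : CS (HH2 F) := (F2_cs hF hcpt).add (F2_cs hF hcpt).st.neg
  have hz : ∀ y : ℝ × ℝ, y.2 ≤ 0 → F y = 0 := fun y hy =>
    image_eq_zero_of_notMem_tsupport fun h => absurd (hsupp h) (not_lt.2 hy)
  have q1 : ∀ x, QF1 F x = (F x).1 - (TT K1 (pd (1, 0) (HH1 F)) x + TT K2 (pd (1, 0) (HH2 F)) x) := by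
    intro x
    simp only [QF1, pot_eq hF hcpt hsupp]
    rw [((TT_d1 K1_loc c1 x.1 x.2).fun_add (TT_d1 K2_loc c2 x.1 x.2)).fun_neg.deriv]
    ring
  have q2 : ∀ x, QF2 F x = (F x).2 - (TT K1 (pd (0, 1) (HH1 F)) x + TT K2 (pd (0, 1) (HH2 F)) x) := by
    intro x
    simp only [QF2, pot_eq hF hcpt hsupp]
    rw [((TT_d2 K1_loc c1 x.1 x.2).fun_add (TT_d2 K2_loc c2 x.1 x.2)).fun_neg.deriv]
    ring
  refine ⟨?_, ?_, ?_⟩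
  · intro x hx
    have d1 : HasDerivAt (fun a => QF1 F (a, x.2))
        (pd (1, 0) (HH1 F) (x.1, x.2) - (TT K1 (pd (1, 0) (pd (1, 0) (HH1 F))) (x.1, x.2)
          + TT K2 (pd (1, 0) (pd (1, 0) (HH2 F))) (x.1, x.2))) x.1 := by
      refine ((CS_d1 c1 x.1 x.2).sub ((TT_d1 K1_loc (c1.pd (1, 0)) x.1 x.2).add
        (TT_d1 K2_loc (c2.pd (1, 0)) x.1 x.2))).congr_of_eventuallyEq ?_
      refine Filter.Eventually.of_forall fun a => ?_
      simp [q1, HH1, hz (st (a, x.2)) (by simpa [st] using hx.le)]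
    have d2 : HasDerivAt (fun b => QF2 F (x.1, b))
        (pd (0, 1) (HH2 F) (x.1, x.2) - (TT K1 (pd (0, 1) (pd (0, 1) (HH1 F))) (x.1, x.2)
          + TT K2 (pd (0, 1) (pd (0, 1) (HH2 F))) (x.1, x.2))) x.2 := by
      refine ((CS_d2 c2 x.1 x.2).sub ((TT_d2 K1_loc (c1.pd (0, 1)) x.1 x.2).add
        (TT_d2 K2_loc (c2.pd (0, 1)) x.1 x.2))).congr_of_eventuallyEq ?_
      filter_upwards [lt_mem_nhds hx] with b hb
      simp [q2, HH2, hz (st (x.1, b)) (by simpa [st] using hb.le)]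
    rw [d1.deriv, d2.deriv]
    have := lap c1 c2 (x.1, x.2)
    linarith
  · rw [funext q2]
    refine Continuous.continuousOn ?_
    exact hF.continuous.snd.sub ((TT_cont K1_loc (c1.pd _)).add (TT_cont K2_loc (c2.pd _)))
  · intro a
    have h1 := deriv_comp_neg (fun b => pot F (a, b)) 0
    simp only [pot_even, neg_zero] at h1
    simp only [QF2, hz (a, 0) le_rfl]
    simp only [Prod.snd_zero, zero_add]
    linarith
end
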